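/- arXiv:1104.1231 — 6 statements merged into one kernel-verified Lean document; each statement's English description precedes it below -/
import Mathlib

section
/- Every finitely generated infinite group admits a translation-like action by the group of integers ℤ. -/
open scoped Pointwise

/-- A right action of a group `H` on a type `X`. -/
structure RightAction (H X : Type*) [Group H] where
  act : X → H → X
  act_one : ∀ x, act x 1 = x
  act_mul : ∀ x h k, act (act x h) k = act x (h * k)

/-- A right action is translation-like w.r.t. a distance function `d` if it is free and
every element moves points a uniformly bounded distance. -/
def RightAction.IsTranslationLike {H X : Type*} [Group H]
    (a : RightAction H X) (d : X → X → ℝ) : Prop :=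
  (∀ (x : X) (h : H), a.act x h = x → h = 1) ∧
  (∀ h : H, ∃ C : ℝ, ∀ x : X, d x (a.act x h) ≤ C)

/-- A right action is transitive if any point can be moved to any other point. -/
def RightAction.IsTransitive {H X : Type*} [Group H] (a : RightAction H X) : Prop :=
  ∀ x y : X, ∃ h : H, a.act x h = y

/-- `S` is a finite generating set of the group `G`. -/
def IsFinGenSet {G : Type*} [Group G] (S : Set G) : Prop :=
  S.Finite ∧ Subgroup.closure S = ⊤

/-- The left-invariant word-length distance associated to a generating set `S`:
`wordDist S g h` is the least `n` with `g⁻¹ * h ∈ (S ∪ S⁻¹) ^ n`. -/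
noncomputable def wordDist {G : Type*} [Group G] (S : Set G) (g h : G) : ℕ :=
  sInf {n : ℕ | g⁻¹ * h ∈ (S ∪ S⁻¹) ^ n}

/-- The word metric as a real-valued distance function. -/
noncomputable def wordMetric {G : Type*} [Group G] (S : Set G) : G → G → ℝ :=
  fun g h => (wordDist S g h : ℝ)

/-!
The cube of a finite tree has a Hamiltonian cycle (Sekanina): in a depth-first traversal, visit the
vertices of even depth on the way down and those of odd depth on the way up. Hence, in a connected
graph, every finite set of vertices lies on a cycle whose steps have length at most `3`. If the
graph is infinite and locally finite, Rado selection extracts from ever larger such cycles a limit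
permutation, which still has steps of length at most `3` but has no finite orbit: its powers are a
translation-like action of `ℤ`. Applied to a Cayley graph, this action has, for each `n`, all
displacements `x⁻¹ * (x * n)` in a finite subset of the group, a condition that does not refer to
any particular left-invariant metric.
-/

open Equiv SimpleGraph

namespace GeometricBurnside

section Perm

variable {V : Type*} {φ ψ : Perm V}

theorem sameCycle_of_forall_sameCycle_apply (h : ∀ a, ψ.SameCycle a (φ a)) {x y : V}
    (hxy : φ.SameCycle x y) : ψ.SameCycle x y := by
  obtain ⟨n, rfl⟩ := hxy
  induction n with
  | zero => exact Perm.SameCycle.rfl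
  | succ n ih =>
    rw [add_comm, zpow_one_add]
    exact ih.trans (h _)
  | pred n ih =>
    rw [sub_eq_neg_add, zpow_add, zpow_neg_one]
    exact ih.trans (by simpa using (h (φ⁻¹ ((φ ^ (-(n : ℤ))) x))).symm)

theorem isCycleOn_insert_mul_swap [DecidableEq V] {s : Set V} (hφ : φ.IsCycleOn s) {v w : V}
    (hv : v ∈ s) (hw : φ w = w) : (φ * swap v w).IsCycleOn (insert w s) := by
  have mem_iff (a : V) : (φ * swap v w) a ∈ insert w s ↔ a ∈ insert w s := by
    have hφ_mem (b : V) : φ b ∈ insert w s ↔ b ∈ insert w s := by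
      rw [Set.mem_insert_iff, Set.mem_insert_iff, hφ.apply_mem_iff, ← φ.apply_eq_iff_eq (x := b),
        hw]
    rw [Perm.mul_apply, hφ_mem]
    grind
  have sameCycle_apply (a : V) : (φ * swap v w).SameCycle a (φ a) := by
    by_cases hav : a = v
    · exact ⟨2, by simp [hav, sq, hw]⟩
    by_cases haw : a = w
    · rw [haw, hw]
    · exact ⟨1, by simp [swap_apply_of_ne_of_ne hav haw]⟩
  have sameCycle_left (y : V) (hy : y ∈ insert w s) : (φ * swap v w).SameCycle v y := by
    rcases hy with rfl | hy
    · exact ⟨1, by simp [hw]⟩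
    · exact sameCycle_of_forall_sameCycle_apply sameCycle_apply (hφ.2 hv hy)
  exact ⟨(φ * swap v w).bijOn mem_iff,
    fun x hx y hy => (sameCycle_left x hx).symm.trans (sameCycle_left y hy)⟩

theorem pow_apply_eq_pow_apply {n : ℕ} {x : V}
    (h : ∀ i < n, φ ((φ ^ i) x) = ψ ((φ ^ i) x)) : (φ ^ n) x = (ψ ^ n) x := by
  induction n with
  | zero => rfl
  | succ n ih =>
    rw [pow_succ', pow_succ', Perm.mul_apply, Perm.mul_apply, h n n.lt_succ_self,
      ih fun i hi => h i (hi.trans n.lt_succ_self)]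

theorem exists_perm_forall_finset_eqOn {N : V → Set V} (hN : ∀ x, (N x).Finite)
    (p : Finset V → Perm V) (hp : ∀ t x, p t x ∈ N x) (hp_symm : ∀ t x, (p t).symm x ∈ N x) :
    ∃ φ : Perm V, ∀ s : Finset V, ∃ t, s ⊆ t ∧ ∀ x ∈ s, φ x = p t x := by
  classical
  have : ∀ x, Finite (N x) := fun x => (hN x).to_subtype
  obtain ⟨χ, hχ⟩ := Finset.rado_selection fun t x => (⟨p t x, hp t x⟩ : N x)
  let f : V → V := fun x => χ x
  have hf (s : Finset V) : ∃ t, s ⊆ t ∧ ∀ x ∈ s, f x = p t x := by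
    obtain ⟨t, hst, ht⟩ := hχ s
    exact ⟨t, hst, fun x hx => congrArg Subtype.val (ht x hx)⟩
  have f_injective : Function.Injective f := by
    intro x y hxy
    obtain ⟨t, -, ht⟩ := hf {x, y}
    rw [ht x (by simp), ht y (by simp)] at hxy
    exact (p t).injective hxy
  -- Every `(p t).symm y` lies in the finite set `N y`, on all of which `f` agrees with some `p t`.
  have f_surjective : Function.Surjective f := by
    intro y
    obtain ⟨t, -, ht⟩ := hf (hN y).toFinset
    exact ⟨(p t).symm y, by rw [ht _ ((hN y).mem_toFinset.2 (hp_symm t y)), apply_symm_apply]⟩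
  exact ⟨Equiv.ofBijective f ⟨f_injective, f_surjective⟩, hf⟩

end Perm

section Graph

variable {V : Type*} {Γ : SimpleGraph V}

/-- A cycle through the vertices in `B` with steps of length at most `3`, encoded as a permutation
of all vertices fixing those outside `B`. The marking `o` makes every vertex reserve one of its two
arcs, the outgoing one if `o a` and the incoming one otherwise; an arc is one shorter for each
of its endpoints reserving it, which leaves room to insert a neighbour of that endpoint there. -/
structure IsReservedCycle (Γ : SimpleGraph V) (o : V → Bool) (φ : Perm V) (B : Finset V) :
    Prop where
  isCycleOn : φ.IsCycleOn (B : Set V)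
  apply_eq_self : ∀ a ∉ B, φ a = a
  length_le : ∀ a, Γ.dist a (φ a) + (o a).toNat + (!o (φ a)).toNat ≤ 3

namespace IsReservedCycle

variable {o : V → Bool} {φ : Perm V} {B : Finset V}

theorem singleton (Γ : SimpleGraph V) (o : V → Bool) (r : V) : IsReservedCycle Γ o 1 {r} where
  isCycleOn := by simp
  apply_eq_self _ _ := rfl
  length_le a := by cases h : o a <;> simp [h]

theorem inv (h : IsReservedCycle Γ o φ B) : IsReservedCycle Γ (fun a => !o a) φ⁻¹ B where
  isCycleOn := h.isCycleOn.inv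
  apply_eq_self a ha := Perm.inv_eq_iff_eq.2 (h.apply_eq_self a ha).symm
  length_le a := by
    have := h.length_le (φ⁻¹ a)
    rw [Perm.inv_def, apply_symm_apply, dist_comm, ← Perm.inv_def] at this
    rw [Bool.not_not]
    omega

theorem dist_apply_le (h : IsReservedCycle Γ o φ B) (a : V) : Γ.dist a (φ a) ≤ 3 := by
  have := h.length_le a
  omega

theorem insert_after [DecidableEq V] (hΓ : Γ.Connected) (h : IsReservedCycle Γ o φ B) {v w : V}
    (hv : v ∈ B) (hw : w ∉ B) (hvw : Γ.Adj v w) (hov : o v = true) (how : o w = false) :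
    IsReservedCycle Γ o (φ * swap v w) (insert w B) where
  isCycleOn := by
    rw [Finset.coe_insert]
    exact isCycleOn_insert_mul_swap h.isCycleOn hv (h.apply_eq_self w hw)
  apply_eq_self a ha := by
    rw [Finset.mem_insert, not_or] at ha
    rw [Perm.mul_apply, swap_apply_of_ne_of_ne (ne_of_mem_of_not_mem hv ha.2).symm ha.1,
      h.apply_eq_self a ha.2]
  length_le a := by
    rw [Perm.mul_apply]
    rcases eq_or_ne a v with rfl | hav
    · rw [swap_apply_left, h.apply_eq_self w hw, dist_eq_one_iff_adj.2 hvw, hov, how]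
      rfl
    rcases eq_or_ne a w with rfl | haw
    · have arc_le := h.length_le v
      have detour_le := hΓ.dist_triangle (u := a) (v := v) (w := φ v)
      rw [dist_eq_one_iff_adj.2 hvw.symm] at detour_le
      rw [hov, Bool.toNat_true] at arc_le
      rw [swap_apply_right, how, Bool.toNat_false]
      omega
    · rw [swap_apply_of_ne_of_ne hav haw]
      exact h.length_le a

theorem exists_insert_of_adj [DecidableEq V] (hΓ : Γ.Connected) (h : IsReservedCycle Γ o φ B)
    {v w : V} (hv : v ∈ B) (hvw : Γ.Adj v w) (ho : o v ≠ o w) :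
    ∃ ψ, IsReservedCycle Γ o ψ (insert w B) := by
  by_cases hw : w ∈ B
  · exact ⟨φ, by rwa [Finset.insert_eq_of_mem hw]⟩
  cases hov : o v with
  | true => exact ⟨_, h.insert_after hΓ hv hw hvw hov (by simpa [hov] using ho.symm)⟩
  | false =>
    have how : o w = true := by simpa [hov] using ho.symm
    have h_inv := (h.inv.insert_after hΓ hv hw hvw (by simp [hov]) (by simp [how])).inv
    exact ⟨_, by simpa only [Bool.not_not] using h_inv⟩

theorem exists_superset_of_walk [DecidableEq V] (hΓ : Γ.Connected) (c : Γ.Coloring Bool)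
    (h : IsReservedCycle Γ c φ B) {r x : V} (hr : r ∈ B)
    (p : Γ.Walk r x) : ∃ ψ B', insert x B ⊆ B' ∧ IsReservedCycle Γ c ψ B' := by
  induction p generalizing φ B with
  | nil => exact ⟨φ, B, by simp [hr], h⟩
  | @cons r w x hrw _ ih =>
    obtain ⟨φ', h'⟩ := h.exists_insert_of_adj hΓ hr hrw (c.valid hrw)
    obtain ⟨ψ, B', hB', hψ⟩ := ih h' (Finset.mem_insert_self w B)
    exact ⟨ψ, B', (Finset.insert_subset_insert x (Finset.subset_insert w B)).trans hB', hψ⟩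

end IsReservedCycle

theorem exists_isReservedCycle_superset (hΓ : Γ.Connected) (c : Γ.Coloring Bool) (A : Finset V) :
    ∃ φ B, A ⊆ B ∧ IsReservedCycle Γ c φ B := by
  classical
  obtain ⟨r⟩ := hΓ.nonempty
  suffices ∃ φ B, insert r A ⊆ B ∧ IsReservedCycle Γ c φ B by
    obtain ⟨φ, B, hB, h⟩ := this
    exact ⟨φ, B, (Finset.subset_insert r A).trans hB, h⟩
  induction A using Finset.induction_on with
  | empty => exact ⟨1, {r}, subset_rfl, .singleton Γ c r⟩
  | insert x A _ ih =>
    obtain ⟨φ, B, hB, h⟩ := ih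
    obtain ⟨p⟩ := hΓ r x
    obtain ⟨ψ, B', hB', hψ⟩ := h.exists_superset_of_walk hΓ c (hB (Finset.mem_insert_self r A)) p
    refine ⟨ψ, B', ?_, hψ⟩
    rw [Finset.insert_comm]
    exact (Finset.insert_subset_insert x hB).trans hB'

theorem exists_isCycleOn_superset_dist_le_three (hΓ : Γ.Connected) (A : Finset V) :
    ∃ (φ : Perm V) (B : Finset V), A ⊆ B ∧ φ.IsCycleOn (B : Set V) ∧ ∀ a, Γ.dist a (φ a) ≤ 3 := by
  obtain ⟨T, hTΓ, hT⟩ := hΓ.exists_isTree_le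
  obtain ⟨φ, B, hAB, h⟩ := exists_isReservedCycle_superset hT.connected
    (hT.colorable_two.toColoring (by simp)) A
  exact ⟨φ, B, hAB, h.isCycleOn,
    fun a => ((hT.connected a (φ a)).dist_anti hTΓ).trans (h.dist_apply_le a)⟩

theorem finite_setOf_walk_length_eq (hfin : ∀ v, (Γ.neighborSet v).Finite) (n : ℕ) (u : V) :
    {v | ∃ p : Γ.Walk u v, p.length = n}.Finite := by
  induction n generalizing u with
  | zero =>
    refine (Set.finite_singleton u).subset ?_
    rintro v ⟨p, hp⟩
    exact (p.eq_of_length_eq_zero hp).symm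
  | succ n ih =>
    refine ((hfin u).biUnion fun w _ => ih w).subset ?_
    rintro v ⟨_ | ⟨huw, p⟩, hp⟩
    · simp at hp
    · exact Set.mem_biUnion huw ⟨p, Nat.succ_injective hp⟩

theorem finite_setOf_dist_le (hΓ : Γ.Connected) (hfin : ∀ v, (Γ.neighborSet v).Finite) (u : V)
    (n : ℕ) : {v | Γ.dist u v ≤ n}.Finite := by
  refine ((Set.finite_Iic n).biUnion fun k _ => finite_setOf_walk_length_eq hfin k u).subset ?_
  intro v hv
  exact Set.mem_biUnion hv (hΓ.exists_walk_length_eq_dist u v)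

theorem exists_perm_dist_le_three_notMem_periodicPts [Infinite V] (hΓ : Γ.Connected)
    (hfin : ∀ v, (Γ.neighborSet v).Finite) :
    ∃ φ : Perm V, (∀ x, Γ.dist x (φ x) ≤ 3) ∧ ∀ x, x ∉ Function.periodicPts φ := by
  classical
  choose p B hB hcycle hdist using exists_isCycleOn_superset_dist_le_three hΓ
  obtain ⟨φ, hφ⟩ := exists_perm_forall_finset_eqOn (fun x => finite_setOf_dist_le hΓ hfin x 3)
    p hdist fun t x => by simpa [dist_comm] using hdist t ((p t).symm x)
  refine ⟨φ, fun x => ?_, fun x ⟨n, hn, hx⟩ => ?_⟩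
  · obtain ⟨t, -, ht⟩ := hφ {x}
    rw [ht x (Finset.mem_singleton_self x)]
    exact hdist t x
  -- `φ` agrees along the orbit of `x` with a cycle that has more than `n` vertices.
  · obtain ⟨C, hC⟩ := Infinite.exists_subset_card_eq V (n + 1)
    let orbit := (Finset.range n).image fun i => (φ ^ i) x
    obtain ⟨t, hst, ht⟩ := hφ (orbit ∪ C)
    have mem_orbit {i : ℕ} (hi : i < n) : (φ ^ i) x ∈ orbit ∪ C :=
      Finset.mem_union_left C (Finset.mem_image_of_mem _ (Finset.mem_range.2 hi))
    have pow_eq : (φ ^ n) x = (p t ^ n) x := pow_apply_eq_pow_apply fun i hi => ht _ (mem_orbit hi)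
    have pow_fixed : (p t ^ n) x = x := by
      rw [← pow_eq, ← Perm.iterate_eq_pow]
      exact hx
    have card_dvd := ((hcycle t).pow_apply_eq (hB t (hst (mem_orbit hn)))).1 pow_fixed
    have card_le := Finset.card_le_card ((Finset.subset_union_right.trans hst).trans (hB t))
    exact absurd (Nat.le_of_dvd hn card_dvd) (by omega)

/-- The permutations of the vertices that move each point a uniformly bounded distance. -/
def wobblingGroup (hΓ : Γ.Connected) : Subgroup (Perm V) where
  carrier := {φ | ∃ C, ∀ x, Γ.dist x (φ x) ≤ C}
  one_mem' := ⟨0, by simp⟩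
  mul_mem' := by
    rintro φ ψ ⟨C, hC⟩ ⟨D, hD⟩
    exact ⟨D + C, fun x => hΓ.dist_triangle.trans (add_le_add (hD x) (hC (ψ x)))⟩
  inv_mem' := by
    rintro φ ⟨C, hC⟩
    exact ⟨C, fun x => by simpa [dist_comm] using hC (φ⁻¹ x)⟩

end Graph

end GeometricBurnside

namespace RightAction

/-- The right action of `ℤ` by the powers of a permutation. -/
def zpowers {X : Type*} (φ : Equiv.Perm X) : RightAction (Multiplicative ℤ) X where
  act x n := (φ ^ n.toAdd) x
  act_one x := by simp
  act_mul x m n := by rw [toAdd_mul, add_comm, zpow_add, Perm.mul_apply]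

theorem eq_one_of_zpowers_act_eq {X : Type*} {φ : Equiv.Perm X} {x : X}
    (hx : x ∉ Function.periodicPts φ) {n : Multiplicative ℤ} (h : (zpowers φ).act x n = x) :
    n = 1 := by
  have period_eq_zero : MulAction.period φ x = 0 :=
    Function.minimalPeriod_eq_zero_of_notMem_periodicPts hx
  have := MulAction.zpow_smul_eq_iff_period_dvd (g := φ).1 h
  rwa [period_eq_zero, Nat.cast_zero, zero_dvd_iff] at this

theorem IsTranslationLike.of_mul_left_invariant {G H : Type*} [Group G] [Group H]
    {a : RightAction H G} {d₀ d : G → G → ℝ} (ha : a.IsTranslationLike d₀)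
    (hd₀ : ∀ g x y, d₀ (g * x) (g * y) = d₀ x y) (hd₀_fin : ∀ C, {g | d₀ 1 g ≤ C}.Finite)
    (hd : ∀ g x y, d (g * x) (g * y) = d x y) : a.IsTranslationLike d := by
  refine ⟨ha.1, fun h => ?_⟩
  obtain ⟨C, hC⟩ := ha.2 h
  obtain ⟨D, hD⟩ := ((hd₀_fin C).image (d 1)).bddAbove
  refine ⟨D, fun x => ?_⟩
  have displacement_mem : x⁻¹ * a.act x h ∈ {g | d₀ 1 g ≤ C} := by
    rw [Set.mem_ofPred_eq, ← hd₀ x, mul_one, mul_inv_cancel_left]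
    exact hC x
  rw [← hd x⁻¹, inv_mul_cancel]
  exact hD (Set.mem_image_of_mem _ displacement_mem)

end RightAction

namespace GeometricBurnside

theorem exists_rightAction_isTranslationLike_dist {V : Type*} [Infinite V] {Γ : SimpleGraph V}
    (hΓ : Γ.Connected) (hfin : ∀ v, (Γ.neighborSet v).Finite) :
    ∃ a : RightAction (Multiplicative ℤ) V, a.IsTranslationLike fun x y => (Γ.dist x y : ℝ) := by
  obtain ⟨φ, hdist, hφ⟩ := exists_perm_dist_le_three_notMem_periodicPts hΓ hfin
  have φ_mem : φ ∈ wobblingGroup hΓ := ⟨3, hdist⟩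
  refine ⟨.zpowers φ, fun x n => RightAction.eq_one_of_zpowers_act_eq (hφ x), fun n => ?_⟩
  obtain ⟨C, hC⟩ := zpow_mem φ_mem n.toAdd
  exact ⟨C, fun x => Nat.cast_le.2 (hC x)⟩

theorem edist_apply_le {V W : Type*} {Γ : SimpleGraph V} {Δ : SimpleGraph W} (f : Γ →g Δ)
    (u v : V) : Δ.edist (f u) (f v) ≤ Γ.edist u v :=
  le_iInf fun p => (edist_le (p.map f)).trans_eq (by rw [Walk.length_map])

section CayleyGraph

variable {G : Type*} [Group G] (S : Set G)

theorem mulCayley_dist_mul_left (g x y : G) :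
    (mulCayley S).dist (g * x) (g * y) = (mulCayley S).dist x y := by
  let translate (g : G) : mulCayley S →g mulCayley S := ⟨(g * ·), mulCayley_adj_mul_iff_right.2⟩
  refine congrArg ENat.toNat (le_antisymm (edist_apply_le (translate g) x y) ?_)
  simpa [translate] using edist_apply_le (translate g⁻¹) (g * x) (g * y)

theorem wordMetric_mul_left (g x y : G) :
    wordMetric S (g * x) (g * y) = wordMetric S x y := by
  simp only [wordMetric, wordDist, mul_inv_rev, mul_assoc, inv_mul_cancel_left]

variable {S}

theorem mulCayley_connected (hS : Subgroup.closure S = ⊤) : (mulCayley S).Connected := by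
  have reachable_mul (x : G) {s : G} (hs : s ∈ S) : (mulCayley S).Reachable x (x * s) := by
    by_cases hx : x = x * s
    · rw [← hx]
    · exact Adj.reachable (by simp [mulCayley_adj, hx, hs])
  have reachable_one (x : G) : (mulCayley S).Reachable 1 x := by
    have hx : x ∈ Subgroup.closure S := hS ▸ Subgroup.mem_top x
    induction hx using Subgroup.closure_induction_right with
    | one => exact .rfl
    | mul_right x _ s hs ih => exact ih.trans (reachable_mul x hs)
    | mul_inv_cancel x _ s hs ih =>
      exact ih.trans (by simpa using (reachable_mul (x * s⁻¹) hs).symm)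
  exact connected_iff_exists_forall_reachable _ |>.2 ⟨1, reachable_one⟩

theorem mulCayley_neighborSet_finite (hS : S.Finite) (x : G) :
    ((mulCayley S).neighborSet x).Finite := by
  refine ((hS.union hS.inv).image (x * ·)).subset ?_
  intro y hxy
  refine ⟨x⁻¹ * y, ?_, mul_inv_cancel_left x y⟩
  simpa using ((mulCayley_adj S x y).1 hxy).2

end CayleyGraph

end GeometricBurnside

open GeometricBurnside in
theorem geometric_burnside_problem_general (G : Type*) [Group G] [Group.FG G] [Infinite G] :
    ∃ a : RightAction (Multiplicative ℤ) G,
      ∀ d : G → G → ℝ, (∀ g x y, d (g * x) (g * y) = d x y) → a.IsTranslationLike d := by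
  obtain ⟨S, hS, hS_fin⟩ := Group.fg_iff.1 ‹Group.FG G›
  have connected := mulCayley_connected hS
  have locally_finite := mulCayley_neighborSet_finite hS_fin
  obtain ⟨a, ha⟩ := exists_rightAction_isTranslationLike_dist connected locally_finite
  have ball_finite (C : ℝ) : {g | ((mulCayley S).dist 1 g : ℝ) ≤ C}.Finite :=
    (finite_setOf_dist_le connected locally_finite 1 ⌊C⌋₊).subset fun g hg => Nat.le_floor hg
  exact ⟨a, fun d hd => ha.of_mul_left_invariant
    (fun g x y => congrArg Nat.cast (mulCayley_dist_mul_left S g x y)) ball_finite hd⟩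

/-- **Geometric Burnside's Problem.** Every finitely generated infinite group admits a
translation-like action by `ℤ` (w.r.t. the word metric of any finite generating set). -/
theorem geometric_burnside_problem (G : Type*) [Group G] [Group.FG G] [Infinite G] :
    ∃ a : RightAction (Multiplicative ℤ) G,
      ∀ S : Set G, IsFinGenSet S → a.IsTranslationLike (wordMetric S) := by
  obtain ⟨a, ha⟩ := geometric_burnside_problem_general G
  exact ⟨a, fun S _ => ha _ (GeometricBurnside.wordMetric_mul_left S)⟩
end

section
/- A connected graph Γ admits a transitive translation-like action by ℤ if and only if Γ is bilipschitz equivalent to a graph admitting a bi-infinite Hamiltonian path. -/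
open scoped Pointwise

universe u

/-- The path-length distance on the vertices of a graph, as a real-valued function. -/
noncomputable def graphDist {V : Type*} (Γ : SimpleGraph V) : V → V → ℝ :=
  fun u v => (Γ.dist u v : ℝ)

/-- A bi-infinite Hamiltonian path in a graph: a bijection `P : ℤ → V` with `P k`
adjacent to `P (k+1)` for all `k`. -/
def BiInfHamPath {V : Type*} (Γ : SimpleGraph V) : Prop :=
  ∃ P : ℤ → V, Function.Bijective P ∧ ∀ k : ℤ, Γ.Adj (P k) (P (k + 1))

/-- Two distance functions are bilipschitz equivalent if there is a bijection `f` and a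
constant `c > 0` with `(1/c) d(x₁,x₂) ≤ ρ(f x₁, f x₂) ≤ c · d(x₁,x₂)`. -/
def BilipEquiv {X Y : Type*} (d : X → X → ℝ) (ρ : Y → Y → ℝ) : Prop :=
  ∃ (f : X → Y) (c : ℝ), Function.Bijective f ∧ 0 < c ∧
    ∀ x₁ x₂ : X, (1 / c) * d x₁ x₂ ≤ ρ (f x₁) (f x₂) ∧ ρ (f x₁) (f x₂) ≤ c * d x₁ x₂

/-!
For a free transitive action of `ℤ`, the orbit map `k ↦ x₀ * k` is a bijection from `ℤ`, and
translation-likeness says that its steps have bounded length; conversely a bijective enumeration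
with bounded steps carries the regular action of `ℤ` over to the space, and the triangle inequality
bounds the displacement of `n` by `|n|` steps. The existence of such an enumeration is a bilipschitz
invariant. A Hamiltonian path is one with steps of length one, and adding the steps of a
bounded-step enumeration as edges makes it a Hamiltonian path while shrinking distances by at most
a bounded factor.
-/

namespace RightAction

variable {H X : Type*} [Group H]

lemma bijective_act {a : RightAction H X} (htrans : a.IsTransitive)
    (hfree : ∀ (x : X) (h : H), a.act x h = x → h = 1) (x : X) :
    Function.Bijective (a.act x) := by
  refine ⟨fun g h hgh ↦ ?_, htrans x⟩
  have hfix : a.act x (g * h⁻¹) = x := by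
    rw [← a.act_mul, hgh, a.act_mul, mul_inv_cancel, a.act_one]
  exact mul_inv_eq_one.mp (hfree x _ hfix)

/-- The right regular action of `H`, transported to `X` along a bijection `e : H ≃ X`. -/
def ofEquiv (e : H ≃ X) : RightAction H X where
  act x h := e (e.symm x * h)
  act_one := by simp
  act_mul := by simp [mul_assoc]

lemma isTransitive_ofEquiv (e : H ≃ X) : (ofEquiv e).IsTransitive := fun x y ↦
  ⟨(e.symm x)⁻¹ * e.symm y, by simp [ofEquiv]⟩

lemma isTranslationLike_ofEquiv_iff {e : H ≃ X} {d : X → X → ℝ} :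
    (ofEquiv e).IsTranslationLike d ↔ ∀ h, ∃ C, ∀ g, d (e g) (e (g * h)) ≤ C := by
  have hfree (x : X) (h : H) (hx : (ofEquiv e).act x h = x) : h = 1 :=
    mul_eq_left.mp (e.eq_symm_apply.mpr hx)
  rw [IsTranslationLike, and_iff_right hfree]
  simp only [ofEquiv, e.symm.forall_congr_left, Equiv.symm_symm, Equiv.symm_apply_apply]

end RightAction

/-- `X` can be enumerated bijectively by `ℤ` so that consecutive points are at uniformly bounded
distance. For a metric this is the geometric content of a transitive translation-like action
of `ℤ`, freed from the choice of a group action. -/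
def HasBoundedStepEnumeration {X : Type*} (d : X → X → ℝ) : Prop :=
  ∃ P : ℤ → X, Function.Bijective P ∧ ∃ C : ℝ, ∀ k, d (P k) (P (k + 1)) ≤ C

lemma HasBoundedStepEnumeration.of_bilipEquiv {X Y : Type*} {d : X → X → ℝ} {ρ : Y → Y → ℝ}
    (hρ : HasBoundedStepEnumeration ρ) (hdρ : BilipEquiv d ρ) : HasBoundedStepEnumeration d := by
  obtain ⟨P, hP, C, hC⟩ := hρ
  obtain ⟨f, c, hf, hc, hfc⟩ := hdρ
  let F := Equiv.ofBijective f hf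
  refine ⟨F.symm ∘ P, F.symm.bijective.comp hP, c * C, fun k ↦ ?_⟩
  have hlower := (hfc (F.symm (P k)) (F.symm (P (k + 1)))).1
  rw [one_div, inv_mul_le_iff₀ hc] at hlower
  calc d (F.symm (P k)) (F.symm (P (k + 1)))
      ≤ c * ρ (F (F.symm (P k))) (F (F.symm (P (k + 1)))) := hlower
    _ = c * ρ (P k) (P (k + 1)) := by simp only [Equiv.apply_symm_apply]
    _ ≤ c * C := by gcongr; exact hC k

lemma RightAction.IsTranslationLike.hasBoundedStepEnumeration {X : Type*} [Nonempty X]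
    {d : X → X → ℝ} {a : RightAction (Multiplicative ℤ) X} (ha : a.IsTranslationLike d)
    (htrans : a.IsTransitive) : HasBoundedStepEnumeration d := by
  obtain ⟨x₀⟩ := ‹Nonempty X›
  obtain ⟨C, hC⟩ := ha.2 (.ofAdd 1)
  refine ⟨a.act x₀ ∘ Multiplicative.ofAdd,
    (bijective_act htrans ha.1 x₀).comp Multiplicative.ofAdd.bijective, C, fun k ↦ ?_⟩
  simpa only [Function.comp_apply, ofAdd_add, ← a.act_mul] using hC (a.act x₀ (.ofAdd k))

section PseudoMetricSpace

variable {X : Type*} [PseudoMetricSpace X] {C : ℝ}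

lemma dist_add_le_mul_abs {f : ℤ → X} (hf : ∀ k, dist (f k) (f (k + 1)) ≤ C) (m n : ℤ) :
    dist (f m) (f (m + n)) ≤ C * |(n : ℝ)| := by
  have hforward (m : ℤ) (n : ℕ) : dist (f m) (f (m + n)) ≤ C * n := by
    have hstep (k : ℕ) : dist (f (m + k)) (f (m + (k + 1 : ℕ))) ≤ C := by
      simpa only [Nat.cast_succ, add_assoc] using hf (m + k)
    simpa [mul_comm] using
      dist_le_range_sum_of_dist_le (f := fun k : ℕ ↦ f (m + k)) n fun {k} _ ↦ hstep k
  obtain ⟨n, rfl | rfl⟩ := Int.eq_nat_or_neg n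
  · simpa using hforward m n
  · simpa [dist_comm] using hforward (m + -n) n

lemma exists_isTransitive_isTranslationLike_iff_hasBoundedStepEnumeration [Nonempty X] :
    (∃ a : RightAction (Multiplicative ℤ) X, a.IsTransitive ∧
      a.IsTranslationLike (dist : X → X → ℝ)) ↔
    HasBoundedStepEnumeration (dist : X → X → ℝ) := by
  refine ⟨fun ⟨a, htrans, ha⟩ ↦ ha.hasBoundedStepEnumeration htrans, fun ⟨P, hP, C, hC⟩ ↦ ?_⟩
  let e : Multiplicative ℤ ≃ X := Multiplicative.toAdd.trans (.ofBijective P hP)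
  refine ⟨.ofEquiv e, RightAction.isTransitive_ofEquiv e,
    RightAction.isTranslationLike_ofEquiv_iff.mpr fun n ↦ ⟨C * |(n.toAdd : ℝ)|, fun k ↦ ?_⟩⟩
  exact dist_add_le_mul_abs hC k.toAdd n.toAdd

lemma dist_le_mul_walk_length {V : Type*} {Γ : SimpleGraph V} {f : V → X}
    (hf : ∀ u v, Γ.Adj u v → dist (f u) (f v) ≤ C) {u v : V} (p : Γ.Walk u v) :
    dist (f u) (f v) ≤ C * p.length := by
  induction p with
  | nil => simp
  | @cons u v w huv p ih =>
    calc dist (f u) (f w) ≤ dist (f u) (f v) + dist (f v) (f w) := dist_triangle _ _ _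
      _ ≤ C + C * p.length := add_le_add (hf u v huv) ih
      _ = C * (p.cons huv).length := by rw [SimpleGraph.Walk.length_cons]; push_cast; ring

lemma dist_le_mul_graphDist {V : Type*} {Γ : SimpleGraph V} {f : V → X}
    (hf : ∀ u v, Γ.Adj u v → dist (f u) (f v) ≤ C) {u v : V} (huv : Γ.Reachable u v) :
    dist (f u) (f v) ≤ C * graphDist Γ u v := by
  obtain ⟨p, hp⟩ := huv.exists_walk_length_eq_dist
  simpa only [graphDist, hp] using dist_le_mul_walk_length hf p

end PseudoMetricSpace

section Graph

variable {V : Type*} {Γ Γ' : SimpleGraph V}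

lemma graphDist_eq_one_of_adj {u v : V} (h : Γ.Adj u v) : graphDist Γ u v = 1 := by
  rw [graphDist, SimpleGraph.dist_eq_one_iff_adj.mpr h, Nat.cast_one]

/-- The path-length metric on the vertices of a connected graph; its `dist` is definitionally
`graphDist Γ`. It is not an instance, since `V` does not determine `Γ`. -/
noncomputable abbrev graphMetricSpace (hΓ : Γ.Connected) : MetricSpace V where
  dist := graphDist Γ
  dist_self := by simp [graphDist]
  dist_comm := by simp [graphDist, SimpleGraph.dist_comm]
  dist_triangle _ _ _ := by
    simpa only [graphDist, ← Nat.cast_add, Nat.cast_le] using hΓ.dist_triangle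
  eq_of_dist_eq_zero h := hΓ.dist_eq_zero_iff.mp (Nat.cast_eq_zero.mp h)

lemma bilipEquiv_graphDist_of_le (hΓ : Γ.Connected) (hle : Γ ≤ Γ') {C : ℝ} (hC : 1 ≤ C)
    (hadj : ∀ u v, Γ'.Adj u v → graphDist Γ u v ≤ C) :
    BilipEquiv (graphDist Γ) (graphDist Γ') := by
  have hC₀ : 0 < C := zero_lt_one.trans_le hC
  refine ⟨id, C, Function.bijective_id, hC₀, fun u v ↦ ⟨?_, ?_⟩⟩
  · rw [one_div, inv_mul_le_iff₀ hC₀]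
    let _ := graphMetricSpace hΓ
    exact dist_le_mul_graphDist (f := id) hadj ((hΓ u v).mono hle)
  · calc graphDist Γ' u v ≤ graphDist Γ u v := Nat.cast_le.mpr ((hΓ u v).dist_anti hle)
      _ ≤ C * graphDist Γ u v := le_mul_of_one_le_left (Nat.cast_nonneg _) hC

/-- The graph `Γ` with the steps of the sequence `P` added as edges (a step from a vertex to itself
adds nothing). -/
def addPath (Γ : SimpleGraph V) (P : ℤ → V) : SimpleGraph V :=
  Γ ⊔ .fromRel fun u v ↦ ∃ k, P k = u ∧ P (k + 1) = v

lemma biInfHamPath_addPath {P : ℤ → V} (hP : Function.Bijective P) :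
    BiInfHamPath (addPath Γ P) :=
  ⟨P, hP, fun k ↦ .inr ⟨hP.injective.ne (by simp), .inl ⟨k, rfl, rfl⟩⟩⟩

lemma graphDist_le_of_addPath_adj {P : ℤ → V} {C : ℝ}
    (hP : ∀ k, graphDist Γ (P k) (P (k + 1)) ≤ C) (u v : V) (huv : (addPath Γ P).Adj u v) :
    graphDist Γ u v ≤ max C 1 := by
  rcases huv with huv | ⟨-, ⟨k, rfl, rfl⟩ | ⟨k, rfl, rfl⟩⟩
  · exact (graphDist_eq_one_of_adj huv).trans_le (le_max_right C 1)
  · exact (hP k).trans (le_max_left C 1)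
  · rw [graphDist, SimpleGraph.dist_comm]
    exact (hP k).trans (le_max_left C 1)

lemma HasBoundedStepEnumeration.exists_bilipEquiv_biInfHamPath (hΓ : Γ.Connected)
    (h : HasBoundedStepEnumeration (graphDist Γ)) :
    ∃ Γ' : SimpleGraph V, Γ'.Connected ∧ BilipEquiv (graphDist Γ) (graphDist Γ') ∧
      BiInfHamPath Γ' := by
  obtain ⟨P, hP, C, hC⟩ := h
  have hle : Γ ≤ addPath Γ P := le_sup_left
  exact ⟨addPath Γ P, hΓ.mono hle,
    bilipEquiv_graphDist_of_le hΓ hle (le_max_right C 1) (graphDist_le_of_addPath_adj hC),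
    biInfHamPath_addPath hP⟩

lemma BiInfHamPath.hasBoundedStepEnumeration (h : BiInfHamPath Γ) :
    HasBoundedStepEnumeration (graphDist Γ) :=
  let ⟨P, hP, hadj⟩ := h
  ⟨P, hP, 1, fun k ↦ (graphDist_eq_one_of_adj (hadj k)).le⟩

end Graph

/-- A connected graph admits a transitive translation-like action by `ℤ` if and only if it
is bilipschitz equivalent to a graph admitting a bi-infinite Hamiltonian path. -/
theorem transitive_Z_action_iff_bilip_to_ham {V : Type u} (Γ : SimpleGraph V)
    (hΓ : Γ.Connected) :
    (∃ a : RightAction (Multiplicative ℤ) V, a.IsTransitive ∧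
       a.IsTranslationLike (graphDist Γ)) ↔
    (∃ (W : Type u) (Γ' : SimpleGraph W), Γ'.Connected ∧
       BilipEquiv (graphDist Γ) (graphDist Γ') ∧ BiInfHamPath Γ') := by
  have := hΓ.nonempty
  let _ := graphMetricSpace hΓ
  refine exists_isTransitive_isTranslationLike_iff_hasBoundedStepEnumeration.trans
    ⟨fun h ↦ ?_, ?_⟩
  · exact ⟨V, h.exists_bilipEquiv_biInfHamPath hΓ⟩
  · rintro ⟨W, Γ', -, hbilip, hham⟩
    exact hham.hasBoundedStepEnumeration.of_bilipEquiv hbilip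
end

section
/- Let Γ be a connected infinite graph whose vertices have uniformly bounded degree. Then Γ is bilipschitz equivalent to a graph admitting a bi-infinite Hamiltonian path if and only if Γ has at most two ends. -/
open scoped Pointwise

universe u

/-- The graph `Γ` has at most `m` ends: for every finite set `A` of edges, the graph
`Γ − A` has at most `m` infinite connected components. -/
def graphEndsLE {V : Type*} (Γ : SimpleGraph V) (m : ℕ) : Prop :=
  ∀ A : Finset (Sym2 V),
    {c : (Γ.deleteEdges (A : Set (Sym2 V))).ConnectedComponent | c.supp.Infinite}.encard ≤ m

/-!
A connected graph is bilipschitz equivalent to each of its powers, and a bilipschitz equivalence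
carries a bi-infinite Hamiltonian path to a bijection from `ℤ` with bounded jumps. So the question
is whether some power of `Γ` has a bi-infinite Hamiltonian path.

If such a path has jumps at most `k`, then after deleting finitely many edges only finitely many of
its jumps pass between different components, because a jump that does so starts within distance `k`
of a deleted edge. Hence all but finitely many vertices lie in the two components that contain the
two tails of the path.

Conversely, let `D` induce a connected one-ended subgraph. A finite connected piece containing any
prescribed vertices can be peeled off `D` so that the remainder is again connected and one-ended,
and by Sekanina's theorem the cube of the piece has a Hamiltonian path that starts at a prescribed
vertex and ends next to the remainder. Concatenating these paths enumerates `D` with bounded jumps.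
If `Γ` has two ends, a finite edge cut leaves two one-ended components and finitely many other
vertices, and the two enumerations are glued at their starting points. If `Γ` has one end, the even
and the odd terms of a single enumeration play the role of the two halves.
-/

section

open SimpleGraph

section DistPower

variable {V : Type*} {G H : SimpleGraph V} {k l : ℕ}

/-- The `k`-th power of a graph: distinct vertices are adjacent when their distance is at most `k`.
The extended distance keeps different components apart, where `SimpleGraph.dist` is `0`. -/
def distPower (G : SimpleGraph V) (k : ℕ) : SimpleGraph V where
  Adj u v := u ≠ v ∧ G.edist u v ≤ k
  symm := ⟨fun _ _ h => ⟨h.1.symm, SimpleGraph.edist_comm.trans_le h.2⟩⟩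
  loopless := ⟨fun _ h => h.1 rfl⟩

lemma le_distPower (hk : 1 ≤ k) : G ≤ distPower G k := fun _ _ h =>
  ⟨h.ne, (edist_eq_one_iff_adj.2 h).trans_le (by exact_mod_cast hk)⟩

lemma distPower_mono (hkl : k ≤ l) : distPower G k ≤ distPower G l := fun _ _ h =>
  ⟨h.1, h.2.trans (by exact_mod_cast hkl)⟩

lemma edist_le_mul_length_distPower {u v : V} (p : (distPower G k).Walk u v) :
    G.edist u v ≤ k * p.length := by
  induction p with
  | nil => simp
  | @cons a b c h p ih =>
    calc G.edist a c ≤ G.edist a b + G.edist b c := SimpleGraph.edist_triangle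
      _ ≤ k + k * p.length := add_le_add h.2 ih
      _ = k * (p.cons h).length := by push_cast [Walk.length_cons]; ring

lemma dist_le_mul_dist_distPower (hG : G.Connected) (hk : 1 ≤ k) (u v : V) :
    G.dist u v ≤ k * (distPower G k).dist u v := by
  obtain ⟨p, hp⟩ := (hG.mono (le_distPower hk)).exists_walk_length_eq_dist u v
  rw [← hp, ← ENat.natCast_le_natCast, (hG.preconnected u v).coe_dist_eq_edist]
  exact_mod_cast edist_le_mul_length_distPower p

lemma bilipEquiv_distPower (hG : G.Connected) (hk : 1 ≤ k) :
    BilipEquiv (graphDist G) (graphDist (distPower G k)) := by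
  have hk' : (1 : ℝ) ≤ k := by exact_mod_cast hk
  have hk₀ : (0 : ℝ) < k := one_pos.trans_le hk'
  refine ⟨id, k, Function.bijective_id, hk₀, fun u v => ⟨?_, ?_⟩⟩
  · rw [one_div, inv_mul_le_iff₀ hk₀, graphDist, graphDist]
    exact_mod_cast dist_le_mul_dist_distPower hG hk u v
  · have hle : ((distPower G k).dist u v : ℝ) ≤ G.dist u v := by
      exact_mod_cast (hG.preconnected u v).dist_anti (le_distPower hk)
    exact hle.trans (le_mul_of_one_le_left (Nat.cast_nonneg _) hk')

lemma BiInfHamPath.mono (hGH : G ≤ H) (h : BiInfHamPath G) : BiInfHamPath H :=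
  let ⟨P, hP, hadj⟩ := h
  ⟨P, hP, fun n => hGH (hadj n)⟩

lemma biInfHamPath_distPower_iff :
    BiInfHamPath (distPower G k) ↔
      ∃ P : ℤ → V, Function.Bijective P ∧ ∀ n, G.edist (P n) (P (n + 1)) ≤ k :=
  exists_congr fun _ => and_congr_right fun hP => forall_congr' fun _ =>
    and_iff_right (hP.1.ne (by lia))

lemma exists_biInfHamPath_distPower_of_bilipEquiv {W : Type*} {Γ : SimpleGraph W}
    (hG : G.Connected) (hb : BilipEquiv (graphDist G) (graphDist Γ)) (hΓ : BiInfHamPath Γ) :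
    ∃ k, BiInfHamPath (distPower G k) := by
  obtain ⟨f, c, hf, hc, hfc⟩ := hb
  obtain ⟨P, hP, hadj⟩ := hΓ
  let e := Equiv.ofBijective f hf
  refine ⟨⌈c⌉₊, biInfHamPath_distPower_iff.2
    ⟨e.symm ∘ P, e.symm.bijective.comp hP, fun n => ?_⟩⟩
  have hle := (hfc (e.symm (P n)) (e.symm (P (n + 1)))).1
  have hfe (w : W) : f (e.symm w) = w := e.apply_symm_apply w
  rw [hfe, hfe, one_div, inv_mul_le_iff₀ hc, graphDist, graphDist,
    dist_eq_one_iff_adj.2 (hadj n), Nat.cast_one, mul_one] at hle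
  rw [Function.comp, Function.comp, ← (hG.preconnected _ _).coe_dist_eq_edist]
  exact_mod_cast hle.trans (Nat.le_ceil c)

theorem exists_bilipEquiv_biInfHamPath_iff {V : Type u} {G : SimpleGraph V} (hG : G.Connected) :
    (∃ (W : Type u) (Γ : SimpleGraph W), Γ.Connected ∧
      BilipEquiv (graphDist G) (graphDist Γ) ∧ BiInfHamPath Γ) ↔
    ∃ k, BiInfHamPath (distPower G k) := by
  constructor
  · rintro ⟨W, Γ, -, hb, hΓ⟩
    exact exists_biInfHamPath_distPower_of_bilipEquiv hG hb hΓ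
  · rintro ⟨k, hk⟩
    have hle : 1 ≤ k + 1 := Nat.le_add_left 1 k
    exact ⟨V, distPower G (k + 1), hG.mono (le_distPower hle), bilipEquiv_distPower hG hle,
      hk.mono (distPower_mono k.le_succ)⟩

end DistPower

section LocallyFinite

variable {V : Type*} {G : SimpleGraph V}

lemma finite_setOf_edist_le (hlf : ∀ v, (G.neighborSet v).Finite) (a : V) (n : ℕ) :
    {v | G.edist v a ≤ n}.Finite := by
  induction n with
  | zero => simp
  | succ n ih =>
    refine ((Set.finite_singleton a).union (ih.biUnion fun w _ => hlf w)).subset fun v hv => ?_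
    obtain ⟨p, hp⟩ := exists_walk_of_edist_ne_top
      (ne_top_of_le_ne_top (ENat.natCast_ne_top _) hv)
    cases p with
    | nil => exact Or.inl rfl
    | @cons _ w _ h q =>
      refine Or.inr (Set.mem_iUnion₂.2 ⟨w, (edist_le q).trans ?_, h.symm⟩)
      rw [Set.mem_ofPred_eq, ← hp] at hv
      exact_mod_cast Nat.le_of_succ_le_succ (by exact_mod_cast hv)

lemma countable_of_connected (hG : G.Connected) (hlf : ∀ v, (G.neighborSet v).Finite) :
    Countable V := by
  obtain ⟨a⟩ := hG.nonempty
  refine Set.countable_univ_iff.1 ((Set.countable_iUnion fun n =>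
    (finite_setOf_edist_le hlf a n).countable).mono fun v _ => ?_)
  exact Set.mem_iUnion.2 ⟨G.dist v a, (hG.preconnected v a).coe_dist_eq_edist.ge⟩

end LocallyFinite

section DeleteEdges

variable {V : Type*} {G : SimpleGraph V} {A : Set (Sym2 V)}

lemma exists_mem_support_of_not_reachable_deleteEdges {u v : V} (p : G.Walk u v)
    (h : ¬ (G.deleteEdges A).Reachable u v) :
    ∃ a ∈ p.support, (G.deleteEdges A).Reachable u a ∧ ∃ e ∈ A, a ∈ e := by
  obtain ⟨d, hd, hfst, hsnd⟩ :=
    p.exists_boundary_dart {t | (G.deleteEdges A).Reachable u t} (.refl u) h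
  refine ⟨d.fst, p.dart_fst_mem_support_of_mem_darts hd, hfst, d.edge, ?_, ?_⟩
  · by_contra hdA
    have hadj : (G.deleteEdges A).Adj d.fst d.snd := deleteEdges_adj.2 ⟨d.adj, hdA⟩
    exact hsnd (hfst.trans hadj.reachable)
  · exact Sym2.mem_mk_left _ _

lemma finite_setOf_exists_mem_edge (hA : A.Finite) : {a : V | ∃ e ∈ A, a ∈ e}.Finite := by
  have hfin (e : Sym2 V) : (e : Set V).Finite := by
    induction e using Sym2.ind with | _ x y => simp only [Sym2.coe_mk, Set.toFinite]
  exact (hA.biUnion fun e _ => hfin e).subset fun a ⟨e, he, hae⟩ => Set.mem_biUnion he hae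

lemma finite_connectedComponent_deleteEdges (hG : G.Connected) (hA : A.Finite) :
    Finite (G.deleteEdges A).ConnectedComponent := by
  obtain ⟨r⟩ := hG.nonempty
  let mk := (G.deleteEdges A).connectedComponentMk
  refine Set.finite_univ_iff.1
    ((((finite_setOf_exists_mem_edge hA).image mk).insert (mk r)).subset fun c _ => ?_)
  induction c using ConnectedComponent.ind with | _ v =>
  by_cases hv : (G.deleteEdges A).Reachable v r
  · exact Or.inl (ConnectedComponent.eq.2 hv)
  · obtain ⟨p⟩ := hG.preconnected v r
    obtain ⟨a, -, hva, ha⟩ := exists_mem_support_of_not_reachable_deleteEdges p hv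
    exact Or.inr ⟨a, ha, ConnectedComponent.eq.2 hva.symm⟩

end DeleteEdges

section Forward

lemma exists_finite_setOf_ne_and_ne {α : Type*} {f : ℤ → α}
    (hf : {n | f n ≠ f (n + 1)}.Finite) : ∃ a b, {n | f n ≠ a ∧ f n ≠ b}.Finite := by
  obtain ⟨M, hM⟩ := hf.bddAbove
  obtain ⟨m, hm⟩ := hf.bddBelow
  have hright (n : ℤ) (hn : M + 1 ≤ n) : f n = f (M + 1) := by
    induction n, hn using Int.leInduction with
    | base => rfl
    | succ n hn ih =>
      by_contra hne
      have := hM (show f n ≠ f (n + 1) from fun h => hne (h ▸ ih))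
      lia
  have hleft (n : ℤ) (hn : n ≤ m) : f n = f m := by
    induction n, hn using Int.leInductionDown with
    | base => rfl
    | pred n hn ih =>
      by_contra hne
      have := hm (show f (n - 1) ≠ f (n - 1 + 1) from fun h => hne (by simpa [ih] using h))
      lia
  refine ⟨f m, f (M + 1), (Set.finite_Icc m (M + 1)).subset fun n hn => ⟨?_, ?_⟩⟩
  · exact le_of_not_ge fun h => hn.1 (hleft n h)
  · exact le_of_not_ge fun h => hn.2 (hright n h)

variable {V : Type*} {G : SimpleGraph V} {k : ℕ}

lemma finite_setOf_not_reachable_succ (hlf : ∀ v, (G.neighborSet v).Finite) {A : Set (Sym2 V)}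
    (hA : A.Finite) {P : ℤ → V} (hP : Function.Injective P)
    (hk : ∀ n, G.edist (P n) (P (n + 1)) ≤ k) :
    {n | ¬ (G.deleteEdges A).Reachable (P n) (P (n + 1))}.Finite := by
  refine (((finite_setOf_exists_mem_edge hA).biUnion fun a _ =>
    finite_setOf_edist_le hlf a k).preimage hP.injOn).subset fun n hn => ?_
  obtain ⟨p, hp⟩ := exists_walk_of_edist_ne_top
    (ne_top_of_le_ne_top (ENat.natCast_ne_top k) (hk n))
  classical
  obtain ⟨a, hap, -, ha⟩ := exists_mem_support_of_not_reachable_deleteEdges p hn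
  refine Set.mem_iUnion₂.2 ⟨a, ha, ?_⟩
  calc G.edist (P n) a ≤ (p.takeUntil a hap).length := edist_le _
    _ ≤ p.length := by exact_mod_cast p.length_takeUntil_le_length hap
    _ ≤ k := hp.trans_le (hk n)

theorem graphEndsLE_two_of_biInfHamPath_distPower (hlf : ∀ v, (G.neighborSet v).Finite)
    (h : BiInfHamPath (distPower G k)) : graphEndsLE G 2 := by
  obtain ⟨P, hP, hk⟩ := biInfHamPath_distPower_iff.1 h
  intro A
  let mk := (G.deleteEdges (A : Set (Sym2 V))).connectedComponentMk
  obtain ⟨a, b, hab⟩ := exists_finite_setOf_ne_and_ne (f := fun n => mk (P n)) <|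
    (finite_setOf_not_reachable_succ hlf A.finite_toSet hP.1 hk).subset fun n hn h =>
      hn (ConnectedComponent.eq.2 h)
  have hsub : {c : (G.deleteEdges (A : Set (Sym2 V))).ConnectedComponent | c.supp.Infinite} ⊆
      {a, b} := by
    refine fun c hc => by_contra fun hne => hc ((hab.image P).subset fun v hv => ?_)
    obtain ⟨n, rfl⟩ := hP.2 v
    obtain rfl : mk (P n) = c := hv
    exact ⟨n, not_or.1 hne, rfl⟩
  calc _ ≤ ({a, b} : Set _).encard := Set.encard_le_encard hsub
    _ ≤ ({b} : Set _).encard + 1 := Set.encard_insert_le {b} a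
    _ = (2 : ℕ) := by rw [Set.encard_singleton]; norm_num

end Forward

section Induce

variable {V : Type*} {G : SimpleGraph V} {D S U : Set V}

lemma exists_adj_mem_notMem_of_preconnected (hD : (G.induce D).Preconnected) {u v : V}
    (huD : u ∈ D) (hvD : v ∈ D) (hu : u ∈ U) (hv : v ∉ U) :
    ∃ a ∈ D ∩ U, ∃ b ∈ D \ U, G.Adj a b := by
  obtain ⟨p⟩ := hD ⟨u, huD⟩ ⟨v, hvD⟩
  obtain ⟨d, -, hfst, hsnd⟩ := p.exists_boundary_dart (Subtype.val ⁻¹' U) hu hv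
  exact ⟨d.fst, ⟨d.fst.2, hfst⟩, d.snd, ⟨d.snd.2, hsnd⟩, d.adj⟩

lemma subset_of_preconnected_of_adj_closed (hD : (G.induce D).Preconnected) {u : V} (huD : u ∈ D)
    (hu : u ∈ U) (hU : ∀ a ∈ U, ∀ b ∈ D, G.Adj a b → b ∈ U) : D ⊆ U := by
  refine fun v hvD => by_contra fun hv => ?_
  obtain ⟨a, ha, b, hb, hab⟩ := exists_adj_mem_notMem_of_preconnected hD huD hvD hu hv
  exact hb.2 (hU a ha.2 b hb.1 hab)

lemma exists_connected_adj_closed_of_mem {x : V} (hx : x ∈ S) :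
    ∃ U ⊆ S, x ∈ U ∧ (G.induce U).Connected ∧ ∀ a ∈ U, ∀ b ∈ S, G.Adj a b → b ∈ U := by
  let c := (G.induce S).connectedComponentMk ⟨x, hx⟩
  let f : c.toSimpleGraph →g G.induce (Subtype.val '' c.supp) :=
    ⟨fun v => ⟨v.1.1, v.1, v.2, rfl⟩, id⟩
  refine ⟨Subtype.val '' c.supp, Subtype.coe_image_subset S c.supp, ⟨⟨x, hx⟩, rfl, rfl⟩,
    c.connected_toSimpleGraph.map f ?_, ?_⟩
  · rintro ⟨_, v, hv, rfl⟩
    exact ⟨⟨v, hv⟩, rfl⟩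
  · rintro _ ⟨a, ha, rfl⟩ b hb hab
    exact ⟨⟨b, hb⟩, c.mem_supp_of_adj_mem_supp ha hab, rfl⟩

-- A path in `D` from a vertex outside `U` cannot enter `U` before it has met `S`.
lemma preconnected_induce_diff (hD : (G.induce D).Preconnected) (hS : (G.induce S).Preconnected)
    (hne : S.Nonempty) (hSD : S ⊆ D) (hSU : Disjoint S U)
    (hU : ∀ a ∈ U, ∀ b ∈ D \ S, G.Adj a b → b ∈ U) : (G.induce (D \ U)).Preconnected := by
  obtain ⟨s, hs⟩ := hne
  have hle : S ⊆ D \ U := Set.subset_sdiff.2 ⟨hSD, hSU⟩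
  have hreach (v t : D) (p : (G.induce D).Walk v t) (ht : t.1 ∈ S) (hv : v.1 ∉ U) :
      (G.induce (D \ U)).Reachable ⟨v, v.2, hv⟩ ⟨s, hle hs⟩ := by
    have hreachS (a : D) (ha : a.1 ∈ S) :
        (G.induce (D \ U)).Reachable ⟨a, hle ha⟩ ⟨s, hle hs⟩ :=
      (hS ⟨a, ha⟩ ⟨s, hs⟩).map (G.induceHomOfLE hle).toHom
    induction p with
    | nil => exact hreachS _ ht
    | @cons a b _ hab _ ih =>
      by_cases ha : a.1 ∈ S
      · exact hreachS a ha
      · have hb : b.1 ∉ U := fun hb => hv (hU b hb a ⟨a.2, ha⟩ hab.symm)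
        have hadj : (G.induce (D \ U)).Adj ⟨a, a.2, hv⟩ ⟨b, b.2, hb⟩ := hab
        exact hadj.reachable.trans (ih ht hb)
  have hreach_s (v : ↥(D \ U)) : (G.induce (D \ U)).Reachable v ⟨s, hle hs⟩ :=
    let ⟨p⟩ := hD ⟨v, v.2.1⟩ ⟨s, hSD hs⟩
    hreach _ _ p hs v.2.2
  exact fun v w => (hreach_s v).trans (hreach_s w).symm

end Induce

section HamPathOn

variable {V : Type*} {G H : SimpleGraph V} {S T : Set V} {u v w x : V}

/-- There is a path of `H` from `u` to `w` whose set of vertices is exactly `S`. -/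
def HamPathOn (H : SimpleGraph V) (S : Set V) (u w : V) : Prop :=
  ∃ p : H.Walk u w, p.IsPath ∧ {z | z ∈ p.support} = S

lemma HamPathOn.singleton (H : SimpleGraph V) (u : V) : HamPathOn H {u} u u :=
  ⟨.nil, .nil, by simp⟩

lemma HamPathOn.symm (h : HamPathOn H S u w) : HamPathOn H S w u :=
  let ⟨p, hp, hS⟩ := h
  ⟨p.reverse, hp.reverse, by simpa using hS⟩

lemma HamPathOn.append (hS : HamPathOn H S u v) (hvw : H.Adj v w) (hT : HamPathOn H T w x)
    (hST : Disjoint S T) : HamPathOn H (S ∪ T) u x := by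
  obtain ⟨p, hp, rfl⟩ := hS
  obtain ⟨q, hq, rfl⟩ := hT
  have hsupport : (p.append (q.cons hvw)).support = p.support ++ q.support := by
    simp [Walk.support_append]
  refine ⟨p.append (q.cons hvw), ?_, ?_⟩
  · rw [Walk.isPath_def, hsupport, List.nodup_append']
    exact ⟨hp.support_nodup, hq.support_nodup, fun z hp hq => Set.disjoint_left.1 hST hp hq⟩
  · simp only [hsupport, List.mem_append]
    rfl

lemma exists_hamPathOn_edist_le_one (hS : (G.induce S).Preconnected)
    (h : ∀ u ∈ S, ∀ w ∈ S, u ≠ w → HamPathOn H S u w) (hu : u ∈ S) (hw : w ∈ S) :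
    ∃ w' ∈ S, G.edist w' w ≤ 1 ∧ HamPathOn H S u w' := by
  by_cases huw : u = w
  · subst huw
    by_cases hsub : S ⊆ {u}
    · obtain rfl := hsub.antisymm (Set.singleton_subset_iff.2 hu)
      exact ⟨u, hu, by simp, .singleton H u⟩
    · obtain ⟨v, hv, hvu⟩ := Set.not_subset.1 hsub
      obtain ⟨_, ⟨-, rfl⟩, b, hb, hab⟩ :=
        exists_adj_mem_notMem_of_preconnected hS hu hv (Set.mem_singleton u) hvu
      exact ⟨b, hb.1, (edist_eq_one_iff_adj.2 hab.symm).le, h _ hu b hb.1 hab.ne⟩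
  · exact ⟨w, hw, by simp, h u hu w hw huw⟩

/-- Sekanina's theorem. -/
theorem hamPathOn_distPower_three (hfin : S.Finite) (hS : (G.induce S).Preconnected)
    (hu : u ∈ S) (hw : w ∈ S) (huw : u ≠ w) : HamPathOn (distPower G 3) S u w := by
  induction hn : S.ncard using Nat.strong_induction_on generalizing S u w with | _ n ih =>
  subst hn
  have hnear (T : Set V) (hTS : T ⊂ S) (hT : (G.induce T).Preconnected) {x y : V} (hx : x ∈ T)
      (hy : y ∈ T) : ∃ y' ∈ T, G.edist y' y ≤ 1 ∧ HamPathOn (distPower G 3) T x y' :=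
    exists_hamPathOn_edist_le_one hT (fun _ hx _ hy hne => ih _ (Set.ncard_lt_ncard hTS hfin)
      (hfin.subset hTS.subset) hT hx hy hne rfl) hx hy
  obtain ⟨U, hUS, huU, hUconn, hUclosed⟩ :=
    exists_connected_adj_closed_of_mem (G := G) (S := S \ {w}) ⟨hu, huw⟩
  have hwU : w ∉ U := fun h => (hUS h).2 rfl
  have hUS' : U ⊆ S := hUS.trans Set.sdiff_subset
  have hdiff : (G.induce (S \ U)).Preconnected :=
    preconnected_induce_diff hS Preconnected.of_subsingleton
      (Set.singleton_nonempty w) (Set.singleton_subset_iff.2 hw)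
      (Set.disjoint_singleton_left.2 hwU) hUclosed
  obtain ⟨a, ⟨-, haU⟩, b, ⟨hbS, hbU⟩, hab⟩ :=
    exists_adj_mem_notMem_of_preconnected hS hu hw huU hwU
  obtain rfl : b = w := by_contra fun hbw => hbU (hUclosed a haU b ⟨hbS, hbw⟩ hab)
  obtain ⟨a', ha'U, haa', hpathU⟩ :=
    hnear U (hUS'.ssubset_of_mem_notMem hw hwU) hUconn.preconnected huU haU
  obtain ⟨b', hb', hbb', hpathS⟩ :=
    hnear (S \ U) (Set.sdiff_subset.ssubset_of_mem_notMem hu fun h => h.2 huU) hdiff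
      ⟨hw, hwU⟩ ⟨hw, hwU⟩
  have hadj : (distPower G 3).Adj a' b' := by
    refine ⟨fun h => hb'.2 (h ▸ ha'U), ?_⟩
    calc G.edist a' b' ≤ G.edist a' a + G.edist a b + G.edist b b' :=
          SimpleGraph.edist_triangle.trans (by gcongr; exact SimpleGraph.edist_triangle)
      _ ≤ 1 + 1 + 1 := add_le_add (add_le_add haa' (edist_eq_one_iff_adj.2 hab).le)
          (SimpleGraph.edist_comm.trans_le hbb')
      _ = (3 : ℕ) := by norm_num
  rw [← Set.union_sdiff_cancel hUS']
  exact hpathU.append hadj hpathS.symm disjoint_sdiff_self_right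

end HamPathOn

section OneEnded

variable {V : Type*} {G : SimpleGraph V} {D : Set V} {x v : V}

/-- The subgraph induced on `D` is infinite, connected and one-ended. One-endedness is encoded by
requiring the complements of arbitrarily large finite sets to be connected. -/
structure IsOneEnded (G : SimpleGraph V) (D : Set V) : Prop where
  infinite : D.Infinite
  preconnected : (G.induce D).Preconnected
  exists_finite_superset :
    ∀ F : Set V, F.Finite → ∃ L, L.Finite ∧ F ⊆ L ∧ (G.induce (D \ L)).Preconnected

lemma exists_finite_preconnected_of_mem (hD : (G.induce D).Preconnected) (hx : x ∈ D)
    (hv : v ∈ D) : ∃ S ⊆ D, S.Finite ∧ x ∈ S ∧ v ∈ S ∧ (G.induce S).Preconnected := by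
  obtain ⟨p⟩ := hD ⟨x, hx⟩ ⟨v, hv⟩
  let q : G.Walk x v := p.map (Embedding.induce D).toHom
  refine ⟨{z | z ∈ q.support}, fun z hz => ?_, q.support.finite_toSet, q.start_mem_support,
    q.end_mem_support, q.connected_induce_support.preconnected⟩
  obtain ⟨z, -, rfl⟩ := List.mem_map.1 (Walk.support_map _ p ▸ hz)
  exact z.2

lemma IsOneEnded.exists_finite_piece (hD : IsOneEnded G D) (hx : x ∈ D) (hv : v ∈ D) :
    ∃ L ⊆ D, L.Finite ∧ x ∈ L ∧ v ∈ L ∧ (G.induce L).Preconnected ∧ IsOneEnded G (D \ L) := by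
  obtain ⟨S, hSD, hSfin, hxS, hvS, hS⟩ := exists_finite_preconnected_of_mem hD.preconnected hx hv
  obtain ⟨L₀, hL₀fin, hSL₀, hL₀⟩ := hD.exists_finite_superset S hSfin
  obtain ⟨t, ht⟩ := (hD.infinite.sdiff hL₀fin).nonempty
  have hsub : D \ L₀ ⊆ D \ S := Set.sdiff_subset_sdiff_right hSL₀
  obtain ⟨U, hUS, htU, hU, hUclosed⟩ := exists_connected_adj_closed_of_mem (G := G) (hsub ht)
  have hL₀U : D \ L₀ ⊆ U := subset_of_preconnected_of_adj_closed hL₀ ht htU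
    fun a ha b hb => hUclosed a ha b (hsub hb)
  have hUD : U ⊆ D := hUS.trans Set.sdiff_subset
  have hSU : Disjoint S U := Set.disjoint_left.2 fun z hzS hzU => (hUS hzU).2 hzS
  refine ⟨D \ U, Set.sdiff_subset,
    hL₀fin.subset fun z hz => by_contra fun hzL₀ => hz.2 (hL₀U ⟨hz.1, hzL₀⟩),
    ⟨hx, Set.disjoint_left.1 hSU hxS⟩, ⟨hv, Set.disjoint_left.1 hSU hvS⟩,
    preconnected_induce_diff hD.preconnected hS ⟨x, hxS⟩ hSD hSU hUclosed, ?_⟩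
  rw [Set.sdiff_sdiff_cancel_left hUD]
  refine ⟨(hD.infinite.sdiff hL₀fin).mono hL₀U, hU.preconnected, fun F hF => ?_⟩
  obtain ⟨L, hLfin, hFL, hL⟩ := hD.exists_finite_superset (F ∪ L₀) (hF.union hL₀fin)
  obtain ⟨hFL, hL₀L⟩ := Set.union_subset_iff.1 hFL
  have hUL : U \ L = D \ L := (Set.sdiff_subset_sdiff_left hUD).antisymm fun z hz =>
    ⟨hL₀U ⟨hz.1, fun h => hz.2 (hL₀L h)⟩, hz.2⟩
  exact ⟨L, hLfin, hFL, hUL ▸ hL⟩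

lemma IsOneEnded.exists_hamPathOn (hD : IsOneEnded G D) (hx : x ∈ D) (hv : v ∈ D) :
    ∃ L ⊆ D, v ∈ L ∧ IsOneEnded G (D \ L) ∧ ∃ y, HamPathOn (distPower G 3) L x y ∧
      ∃ x' ∈ D \ L, (distPower G 3).Adj y x' := by
  obtain ⟨L, hLD, hLfin, hxL, hvL, hL, hrest⟩ := hD.exists_finite_piece hx hv
  obtain ⟨z, hzD, hzL⟩ := hrest.infinite.nonempty
  obtain ⟨a, ⟨-, haL⟩, x', hx', hax'⟩ :=
    exists_adj_mem_notMem_of_preconnected hD.preconnected hx hzD hxL hzL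
  obtain ⟨y, hyL, hya, hpath⟩ := exists_hamPathOn_edist_le_one hL
    (fun _ hu _ hw => hamPathOn_distPower_three hLfin hL hu hw) hxL haL
  refine ⟨L, hLD, hvL, hrest, y, hpath, x', hx', fun h => hx'.2 (h ▸ hyL), ?_⟩
  calc G.edist y x' ≤ G.edist y a + G.edist a x' := SimpleGraph.edist_triangle
    _ ≤ 1 + 1 := add_le_add hya (edist_eq_one_iff_adj.2 hax').le
    _ ≤ (3 : ℕ) := by norm_num

end OneEnded

section PrefixChain

variable {α : Type*} {R : α → α → Prop} {P : List α → Prop} {C : Set α}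

lemma exists_getElem_eq_of_prefix_chain {L : ℕ → List α} (hprefix : ∀ n, L n <+: L (n + 1))
    (hlength : ∀ n, n ≤ (L n).length) :
    ∃ p : ℕ → α, ∀ n k (h : k < (L n).length), p k = (L n)[k] := by
  have hmono {m n : ℕ} (hmn : m ≤ n) : L m <+: L n :=
    Nat.le_induction (List.prefix_refl _) (fun n _ ih => ih.trans (hprefix n)) n hmn
  refine ⟨fun k => (L (k + 1))[k]'(hlength (k + 1)), fun n k h => ?_⟩
  rcases le_total n (k + 1) with hn | hn
  · exact ((hmono hn).getElem h).symm
  · exact (hmono hn).getElem (hlength (k + 1))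

lemma exists_prefix_chain_of_forall_exists_prefix (hP₀ : P [])
    (hext : ∀ l, P l → ∀ a ∈ C, ∃ l', P l' ∧ l <+: l' ∧ a ∈ l') {e : ℕ → α} (he : ∀ n, e n ∈ C) :
    ∃ L : ℕ → List α, ∀ n, P (L n) ∧ L n <+: L (n + 1) ∧ e n ∈ L (n + 1) := by
  choose next hnext hprefix hmem using fun (l : {l // P l}) n => hext l.1 l.2 (e n) (he n)
  let L : ℕ → {l // P l} := fun n => Nat.rec ⟨[], hP₀⟩ (fun n l => ⟨next l n, hnext l n⟩) n
  exact ⟨fun n => (L n).1, fun n => ⟨(L n).2, hprefix (L n) n, hmem (L n) n⟩⟩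

lemma le_length_of_forall_mem_succ {L : ℕ → List α} {e : ℕ → α} (he : Function.Injective e)
    (hprefix : ∀ n, L n <+: L (n + 1)) (hmem : ∀ n, e n ∈ L (n + 1)) (n : ℕ) :
    n ≤ (L n).length := by
  have hsub : (List.range n).map e ⊆ L n := by
    induction n with
    | zero => simp
    | succ n ih =>
      rw [List.range_succ, List.map_append]
      exact List.append_subset.2 ⟨List.Subset.trans ih (hprefix n).subset, by simpa using hmem n⟩
  simpa using ((List.nodup_range.map he).subperm hsub).length_le

theorem exists_injective_seq_of_forall_exists_prefix (hC : C.Infinite) (hC' : C.Countable)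
    (hP₀ : P []) (hP : ∀ l, P l → l.Nodup ∧ l.IsChain R ∧ ∀ a ∈ l, a ∈ C)
    (hext : ∀ l, P l → ∀ a ∈ C, ∃ l', P l' ∧ l <+: l' ∧ a ∈ l') :
    ∃ p : ℕ → α, Function.Injective p ∧ Set.range p = C ∧ ∀ n, R (p n) (p (n + 1)) := by
  have := hC.to_subtype
  have := hC'.to_subtype
  obtain ⟨e⟩ := nonempty_equiv_of_countable (α := ℕ) (β := C)
  obtain ⟨L, hL⟩ := exists_prefix_chain_of_forall_exists_prefix hP₀ hext fun n => (e n).2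
  have hlength : ∀ n, n ≤ (L n).length :=
    le_length_of_forall_mem_succ (Subtype.val_injective.comp e.injective)
      (fun n => (hL n).2.1) fun n => (hL n).2.2
  obtain ⟨p, hp⟩ := exists_getElem_eq_of_prefix_chain (fun n => (hL n).2.1) hlength
  refine ⟨p, fun i j hij => ?_, Set.Subset.antisymm ?_ fun c hc => ?_, fun n => ?_⟩
  · have hi : i < (L (i + j + 1)).length := (by lia : i < i + j + 1).trans_le (hlength _)
    have hj : j < (L (i + j + 1)).length := (by lia : j < i + j + 1).trans_le (hlength _)
    rw [hp _ i hi, hp _ j hj] at hij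
    exact (hP _ (hL _).1).1.getElem_inj_iff.1 hij
  · rintro _ ⟨n, rfl⟩
    rw [hp (n + 1) n (hlength (n + 1))]
    exact (hP _ (hL _).1).2.2 _ (List.getElem_mem _)
  · obtain ⟨i, hi, hci⟩ := List.getElem_of_mem (hL (e.symm ⟨c, hc⟩)).2.2
    exact ⟨i, by rw [hp _ i hi, hci, e.apply_symm_apply]⟩
  · rw [hp (n + 2) n (by have := hlength (n + 2); lia), hp (n + 2) (n + 1) (hlength (n + 2))]
    exact (hP _ (hL _).1).2.1.getElem n _

end PrefixChain

section CoarseRay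

variable {V : Type*} {G : SimpleGraph V} {C : Set V}

/-- The set `C` can be enumerated without repetition as a sequence with bounded jumps. -/
def HasCoarseRay (G : SimpleGraph V) (C : Set V) : Prop :=
  ∃ (k : ℕ) (p : ℕ → V), Function.Injective p ∧ Set.range p = C ∧
    ∀ n, G.edist (p n) (p (n + 1)) ≤ k

/-- A path in the cube of `G` inside `C` that can be continued to exhaust `C`: the unvisited part
of `C` is one-ended and within reach of the last vertex. -/
structure IsExtendablePath (G : SimpleGraph V) (C : Set V) (l : List V) : Prop where
  nodup : l.Nodup
  isChain : l.IsChain (distPower G 3).Adj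
  mem : ∀ a ∈ l, a ∈ C
  isOneEnded : IsOneEnded G (C \ {z | z ∈ l})
  exists_adj_getLast : ∃ x ∈ C \ {z | z ∈ l}, ∀ y ∈ l.getLast?, (distPower G 3).Adj y x

lemma IsExtendablePath.nil (hC : IsOneEnded G C) : IsExtendablePath G C [] where
  nodup := List.nodup_nil
  isChain := List.isChain_nil
  mem := by simp
  isOneEnded := by simpa using hC
  exists_adj_getLast := by simpa using! hC.infinite.nonempty

lemma IsExtendablePath.exists_prefix_mem {l : List V} (hl : IsExtendablePath G C l) {a : V}
    (ha : a ∈ C) : ∃ l', IsExtendablePath G C l' ∧ l <+: l' ∧ a ∈ l' := by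
  by_cases hal : a ∈ l
  · exact ⟨l, hl, List.prefix_refl l, hal⟩
  obtain ⟨x, hx, hxlast⟩ := hl.exists_adj_getLast
  obtain ⟨_, hLD, haL, hrest, y, ⟨q, hq, rfl⟩, x', hx', hyx'⟩ :=
    hl.isOneEnded.exists_hamPathOn hx ⟨ha, hal⟩
  have hhead : q.support.head? = some x := by
    rw [List.head?_eq_some_head q.support_ne_nil, q.head_support]
  have hlast : q.support.getLast? = some y := by
    rw [List.getLast?_eq_some_getLast q.support_ne_nil, q.getLast_support]
  have hdiff : C \ {z | z ∈ l ++ q.support} = (C \ {z | z ∈ l}) \ {z | z ∈ q.support} := by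
    simp only [List.mem_append, Set.ofPred_or, Set.sdiff_sdiff]
  refine ⟨l ++ q.support, ⟨?_, ?_, ?_, hdiff ▸ hrest, x', hdiff ▸ hx', ?_⟩,
    List.prefix_append _ _, List.mem_append_right l haL⟩
  · exact List.nodup_append'.2 ⟨hl.nodup, hq.support_nodup, fun z hzl hzq => (hLD hzq).2 hzl⟩
  · exact List.isChain_append.2 ⟨hl.isChain, q.isChain_adj_support, by simpa [hhead] using hxlast⟩
  · exact fun z hz => (List.mem_append.1 hz).elim (hl.mem z) fun hzq => (hLD hzq).1
  · simpa [hlast] using hyx'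

theorem IsOneEnded.hasCoarseRay (hC : IsOneEnded G C) (hcount : C.Countable) :
    HasCoarseRay G C := by
  obtain ⟨p, hp, hpC, hadj⟩ := exists_injective_seq_of_forall_exists_prefix
    hC.infinite hcount (IsExtendablePath.nil hC) (fun l hl => ⟨hl.nodup, hl.isChain, hl.mem⟩)
    fun l hl a ha => hl.exists_prefix_mem ha
  exact ⟨3, p, hp, hpC, fun n => (hadj n).2⟩

end CoarseRay

section Splice

variable {V : Type*} {G : SimpleGraph V} {C T : Set V} {a : V}

lemma HasCoarseRay.insert (hG : G.Connected) (h : HasCoarseRay G C) (ha : a ∉ C) :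
    HasCoarseRay G (insert a C) := by
  obtain ⟨k, p, hp, rfl, hk⟩ := h
  let q : ℕ → V := fun n => n.casesOn a p
  refine ⟨k + G.dist a (p 0), q, fun m n hmn => ?_, ?_, fun n => ?_⟩
  · match m, n with
    | 0, 0 => rfl
    | 0, n + 1 => exact (ha ⟨n, hmn.symm⟩).elim
    | m + 1, 0 => exact (ha ⟨m, hmn⟩).elim
    | m + 1, n + 1 => exact congrArg _ (hp hmn)
  · exact Nat.range_casesOn a p
  · rw [Nat.cast_add]
    match n with
    | 0 => exact le_add_left (hG.preconnected a (p 0)).coe_dist_eq_edist.ge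
    | n + 1 => exact le_add_right (hk n)

lemma HasCoarseRay.union_finite (hG : G.Connected) (h : HasCoarseRay G C) (hT : T.Finite) :
    HasCoarseRay G (C ∪ T) := by
  induction T, hT using Set.Finite.induction_on with
  | empty => rwa [Set.union_empty]
  | @insert a T _ _ ih =>
    rw [Set.union_insert]
    by_cases ha : a ∈ C ∪ T
    · rwa [Set.insert_eq_of_mem ha]
    · exact ih.insert hG ha

lemma exists_biInfHamPath_distPower_of_hasCoarseRay_compl (hG : G.Connected)
    (hC : HasCoarseRay G C) (hC' : HasCoarseRay G Cᶜ) : ∃ k, BiInfHamPath (distPower G k) := by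
  obtain ⟨k, p, hp, rfl, hk⟩ := hC
  obtain ⟨l, q, hq, hqC, hl⟩ := hC'
  have hpq (m n : ℕ) : p m ≠ q n := fun h => hqC.le (Set.mem_range_self n) ⟨m, h⟩
  let P : ℤ → V := fun n => n.casesOn p q
  refine ⟨k + l + G.dist (q 0) (p 0),
    biInfHamPath_distPower_iff.2 ⟨P, ⟨fun m n hmn => ?_, fun v => ?_⟩, fun n => ?_⟩⟩
  · match m, n with
    | .ofNat m, .ofNat n => exact congrArg _ (hp hmn)
    | .ofNat m, .negSucc n => exact (hpq m n hmn).elim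
    | .negSucc m, .ofNat n => exact (hpq n m hmn.symm).elim
    | .negSucc m, .negSucc n => exact congrArg _ (hq hmn)
  · by_cases hv : v ∈ Set.range p
    · exact hv.imp' Int.ofNat fun _ => id
    · exact (hqC.ge hv).imp' Int.negSucc fun _ => id
  · rw [Nat.cast_add, Nat.cast_add]
    match n with
    | .ofNat n => exact le_add_right (le_add_right (hk n))
    | .negSucc 0 => exact le_add_left (hG.preconnected (q 0) (p 0)).coe_dist_eq_edist.ge
    | .negSucc (n + 1) =>
      exact le_add_right (le_add_left (SimpleGraph.edist_comm.trans_le (hl n)))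

lemma HasCoarseRay.exists_hasCoarseRay_compl (h : HasCoarseRay G Set.univ) :
    ∃ C, HasCoarseRay G C ∧ HasCoarseRay G Cᶜ := by
  obtain ⟨k, p, hp, hsurj, hk⟩ := h
  have hsubseq (f : ℕ → ℕ) (hf : ∀ n, f (n + 1) = f n + 2) :
      HasCoarseRay G (Set.range (p ∘ f)) := by
    have hmono : StrictMono f := strictMono_nat_of_lt_succ fun n => by grind
    refine ⟨k + k, p ∘ f, hp.comp hmono.injective, rfl, fun n => ?_⟩
    rw [Function.comp, Function.comp, hf, Nat.cast_add]
    exact SimpleGraph.edist_triangle.trans (add_le_add (hk _) (hk _))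
  have hcompl : (Set.range (p ∘ (2 * ·)))ᶜ = Set.range (p ∘ (2 * · + 1)) := by
    rw [Set.range_comp, Set.range_comp, ← Set.image_compl_eq ⟨hp, Set.range_eq_univ.1 hsurj⟩,
      range_two_mul, range_two_mul_add_one, Nat.isCompl_even_odd.compl_eq]
  exact ⟨_, hsubseq (2 * ·) fun n => by ring, hcompl ▸ hsubseq (2 * · + 1) fun n => by ring⟩

end Splice

section Ends

variable {V : Type*} {G H : SimpleGraph V}

/-- The union of the finite connected components of a graph. -/
def finitePart (H : SimpleGraph V) : Set V := {v | (H.connectedComponentMk v).supp.Finite}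

lemma finite_finitePart (H : SimpleGraph V) [Finite H.ConnectedComponent] :
    (finitePart H).Finite :=
  (Set.Finite.biUnion (Set.toFinite {c : H.ConnectedComponent | c.supp.Finite})
    fun _ hc => hc).subset fun _ hv => Set.mem_biUnion hv rfl

lemma preconnected_induce_supp (hHG : H ≤ G) (c : H.ConnectedComponent) :
    (G.induce c.supp).Preconnected :=
  (c.connected_toSimpleGraph.mono (comap_monotone _ hHG)).preconnected

lemma finite_incidenceSet {v : V} (hv : (G.neighborSet v).Finite) : (G.incidenceSet v).Finite := by
  classical
  have := hv.to_subtype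
  exact Finite.of_equiv _ (G.incidenceSetEquivNeighborSet v).symm

lemma mem_finitePart_of_incidenceSet_subset {A : Set (Sym2 V)} {v : V}
    (hA : G.incidenceSet v ⊆ A) : v ∈ finitePart (G.deleteEdges A) := by
  refine (Set.finite_singleton v).subset fun w hw => by_contra fun hwv => ?_
  obtain ⟨p⟩ := (ConnectedComponent.exact hw).symm
  cases p with
  | nil => exact hwv rfl
  | cons hadj _ =>
    obtain ⟨hadj, hnotMem⟩ := deleteEdges_adj.1 hadj
    exact hnotMem (hA (G.mem_incidenceSet v _ |>.2 hadj))

lemma eq_or_eq_or_eq_of_graphEndsLE_two (h : graphEndsLE G 2) {A : Set (Sym2 V)} (hA : A.Finite)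
    {c₁ c₂ c₃ : (G.deleteEdges A).ConnectedComponent} (h₁ : c₁.supp.Infinite)
    (h₂ : c₂.supp.Infinite) (h₃ : c₃.supp.Infinite) : c₁ = c₂ ∨ c₁ = c₃ ∨ c₂ = c₃ := by
  lift A to Finset (Sym2 V) using hA
  by_contra! hne
  have hsub : {c₁, c₂, c₃} ⊆ {c : (G.deleteEdges (A : Set (Sym2 V))).ConnectedComponent |
      c.supp.Infinite} := by
    rintro _ (rfl | rfl | rfl) <;> assumption
  have hcard := (Set.encard_le_encard hsub).trans (h A)
  rw [Set.encard_eq_three.2 ⟨c₁, c₂, c₃, hne.1, hne.2.1, hne.2.2, rfl⟩] at hcard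
  exact absurd hcard (by norm_num)

lemma isOneEnded_supp (hG : G.Connected) (hlf : ∀ v, (G.neighborSet v).Finite) {A₀ : Set (Sym2 V)}
    (hA₀ : A₀.Finite) {c : (G.deleteEdges A₀).ConnectedComponent} (hc : c.supp.Infinite)
    (hreach : ∀ A : Set (Sym2 V), A.Finite → A₀ ⊆ A →
      ∀ x ∈ c.supp \ finitePart (G.deleteEdges A), ∀ y ∈ c.supp \ finitePart (G.deleteEdges A),
        (G.deleteEdges A).Reachable x y) :
    IsOneEnded G c.supp := by
  refine ⟨hc, preconnected_induce_supp (G.deleteEdges_le A₀) c, fun F hF => ?_⟩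
  let A : Set (Sym2 V) := A₀ ∪ ⋃ v ∈ F, G.incidenceSet v
  have hA : A.Finite := hA₀.union (hF.biUnion fun v _ => finite_incidenceSet (hlf v))
  let H := G.deleteEdges A
  have hle : H ≤ G.deleteEdges A₀ := deleteEdges_anti Set.subset_union_left
  have := finite_connectedComponent_deleteEdges hG hA
  have hL : (finitePart H).Finite := finite_finitePart H
  obtain ⟨x, hxc, hxL⟩ := (hc.sdiff hL).nonempty
  have hsupp : c.supp \ finitePart H = (H.connectedComponentMk x).supp := by
    refine Set.Subset.antisymm (fun y hy => ?_) fun y hy => ?_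
    · exact ConnectedComponent.sound
        (hreach A hA Set.subset_union_left y hy x ⟨hxc, hxL⟩)
    · have hyx : H.connectedComponentMk y = H.connectedComponentMk x := hy
      refine ⟨?_, fun h => hxL (by rwa [finitePart, Set.mem_ofPred_eq, ← hyx])⟩
      exact (ConnectedComponent.sound
        ((ConnectedComponent.exact hyx).mono hle)).trans hxc
  refine ⟨finitePart H, hL, fun v hv => mem_finitePart_of_incidenceSet_subset ?_, ?_⟩
  · exact (Set.subset_biUnion_of_mem hv).trans Set.subset_union_right
  · rw [hsupp]
    exact preconnected_induce_supp (G.deleteEdges_le A) _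

-- Deleting further edges leaves an infinite component inside `c'`, hence at most one inside `c`.
lemma isOneEnded_supp_of_ne (hG : G.Connected) (hlf : ∀ v, (G.neighborSet v).Finite)
    (h : graphEndsLE G 2) {A₀ : Set (Sym2 V)} (hA₀ : A₀.Finite)
    {c c' : (G.deleteEdges A₀).ConnectedComponent} (hc : c.supp.Infinite)
    (hc' : c'.supp.Infinite) (hne : c ≠ c') : IsOneEnded G c.supp := by
  refine isOneEnded_supp hG hlf hA₀ hc fun A hA hA₀A x hx y hy => ?_
  have := finite_connectedComponent_deleteEdges hG hA
  obtain ⟨z, hzc', hz⟩ := (hc'.sdiff (finite_finitePart (G.deleteEdges A))).nonempty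
  have hnot_reach (w : V) (hw : w ∈ c.supp) : ¬ (G.deleteEdges A).Reachable w z := fun hwz =>
    hne (hw.symm.trans ((ConnectedComponent.sound
      (hwz.mono (deleteEdges_anti hA₀A))).trans hzc'))
  rcases eq_or_eq_or_eq_of_graphEndsLE_two h hA hx.2 hy.2 hz with hxy | hxz | hyz
  · exact ConnectedComponent.exact hxy
  · exact (hnot_reach x hx.1 (ConnectedComponent.exact hxz)).elim
  · exact (hnot_reach y hy.1 (ConnectedComponent.exact hyz)).elim

lemma finite_compl_union_supp (hG : G.Connected) (h : graphEndsLE G 2) {A : Set (Sym2 V)}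
    (hA : A.Finite) {c c' : (G.deleteEdges A).ConnectedComponent} (hc : c.supp.Infinite)
    (hc' : c'.supp.Infinite) (hne : c ≠ c') : (c.supp ∪ c'.supp)ᶜ.Finite := by
  have := finite_connectedComponent_deleteEdges hG hA
  refine (finite_finitePart (G.deleteEdges A)).subset fun v hv => by_contra fun hinf => hv ?_
  rcases eq_or_eq_or_eq_of_graphEndsLE_two h hA hinf hc hc' with hvc | hvc' | hcc'
  · exact Or.inl hvc
  · exact Or.inr hvc'
  · exact (hne hcc').elim

lemma isOneEnded_univ [Infinite V] (hG : G.Connected) (hlf : ∀ v, (G.neighborSet v).Finite)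
    (h : ∀ A : Set (Sym2 V), A.Finite → ∀ c c' : (G.deleteEdges A).ConnectedComponent,
      c.supp.Infinite → c'.supp.Infinite → c = c') : IsOneEnded G Set.univ := by
  obtain ⟨a⟩ := hG.nonempty
  let c := (G.deleteEdges ∅).connectedComponentMk a
  have hc : c.supp = Set.univ := Set.eq_univ_of_forall fun v =>
    ConnectedComponent.sound (by simpa using hG.preconnected v a)
  rw [← hc]
  refine isOneEnded_supp hG hlf Set.finite_empty (hc ▸ Set.infinite_univ)
    fun A hA _ x hx y hy => ?_
  exact ConnectedComponent.exact (h A hA _ _ hx.2 hy.2)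

theorem exists_biInfHamPath_distPower_of_graphEndsLE_two [Infinite V] (hG : G.Connected)
    (hlf : ∀ v, (G.neighborSet v).Finite) (h : graphEndsLE G 2) :
    ∃ k, BiInfHamPath (distPower G k) := by
  have := countable_of_connected hG hlf
  by_cases htwo : ∃ A : Set (Sym2 V), A.Finite ∧ ∃ c c' : (G.deleteEdges A).ConnectedComponent,
      c.supp.Infinite ∧ c'.supp.Infinite ∧ c ≠ c'
  · obtain ⟨A, hA, c, c', hc, hc', hne⟩ := htwo
    have hray := (isOneEnded_supp_of_ne hG hlf h hA hc hc' hne).hasCoarseRay c.supp.to_countable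
    have hray' := (isOneEnded_supp_of_ne hG hlf h hA hc' hc hne.symm).hasCoarseRay
      c'.supp.to_countable
    have hdisj : Disjoint c.supp c'.supp :=
      pairwise_disjoint_supp_connectedComponent _ hne
    have hcompl : c.suppᶜ = c'.supp ∪ (c.supp ∪ c'.supp)ᶜ := by
      rw [Set.compl_union, Set.union_inter_distrib_left, Set.union_compl_self, Set.inter_univ,
        Set.union_eq_right.2 hdisj.symm.subset_compl_right]
    exact exists_biInfHamPath_distPower_of_hasCoarseRay_compl hG hray
      (hcompl ▸ hray'.union_finite hG (finite_compl_union_supp hG h hA hc hc' hne))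
  · push Not at htwo
    obtain ⟨C, hC, hC'⟩ := ((isOneEnded_univ hG hlf htwo).hasCoarseRay
      Set.countable_univ).exists_hasCoarseRay_compl
    exact exists_biInfHamPath_distPower_of_hasCoarseRay_compl hG hC hC'

end Ends

theorem bilip_to_ham_iff_at_most_two_ends_general {V : Type u} (Γ : SimpleGraph V) [Infinite V]
    (hconn : Γ.Connected) (hlf : ∀ v : V, (Γ.neighborSet v).Finite) :
    (∃ (W : Type u) (Γ' : SimpleGraph W), Γ'.Connected ∧
       BilipEquiv (graphDist Γ) (graphDist Γ') ∧ BiInfHamPath Γ') ↔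
    graphEndsLE Γ 2 := by
  rw [exists_bilipEquiv_biInfHamPath_iff hconn]
  exact ⟨fun ⟨_, hk⟩ => graphEndsLE_two_of_biInfHamPath_distPower hlf hk,
    exists_biInfHamPath_distPower_of_graphEndsLE_two hconn hlf⟩

end

/-- A connected infinite graph of uniformly bounded degree is bilipschitz equivalent to a
graph admitting a bi-infinite Hamiltonian path if and only if it has at most two ends. -/
theorem bilip_to_ham_iff_at_most_two_ends {V : Type u} (Γ : SimpleGraph V) [Infinite V]
    (hconn : Γ.Connected) (D : ℕ) (hdeg : ∀ v : V, (Γ.neighborSet v).encard ≤ D) :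
    (∃ (W : Type u) (Γ' : SimpleGraph W), Γ'.Connected ∧
       BilipEquiv (graphDist Γ) (graphDist Γ') ∧ BiInfHamPath Γ') ↔
    graphEndsLE Γ 2 :=
  bilip_to_ham_iff_at_most_two_ends_general Γ hconn fun v =>
    Set.finite_of_encard_le_coe (hdeg v)
end

section
/- Let Λ₁ and Λ₂ be two trees. If every vertex of Λ₁ and of Λ₂ has degree at least three, and the vertex degrees of Λ₁ and Λ₂ are uniformly bounded, then Λ₁ and Λ₂ are bilipschitz equivalent. -/
open scoped Pointwise

/-!
Knuth's left-child right-sibling correspondence turns a rooted tree whose children are linearly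
ordered into a binary tree. Here the nodes of the binary tree stand for nonempty lists of siblings,
each labelled by the first vertex of its list: one branch passes to the children of that vertex, the
other to its remaining siblings. When no sibling remains, the list of children, of length at least
two, is cut in two, so that both branches always exist and the binary tree is complete. The
labelling is a bijection from finite binary words onto the vertices which changes distances by at
most a factor depending on the degree bound, so both trees are bilipschitz equivalent to the same
complete binary tree.
-/

section Bilipschitz

variable {X Y Z : Type*} {d : X → X → ℝ} {ρ : Y → Y → ℝ} {σ : Z → Z → ℝ}

theorem BilipEquiv.symm : BilipEquiv d ρ → BilipEquiv ρ d := by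
  rintro ⟨f, c, hf, hc, hbound⟩
  let e := Equiv.ofBijective f hf
  refine ⟨e.symm, c, e.symm.bijective, hc, fun y₁ y₂ => ?_⟩
  have hy := hbound (e.symm y₁) (e.symm y₂)
  rw [Equiv.ofBijective_apply_symm_apply f hf, Equiv.ofBijective_apply_symm_apply f hf,
    one_div, inv_mul_le_iff₀ hc] at hy
  rw [one_div, inv_mul_le_iff₀ hc]
  exact hy.symm

theorem BilipEquiv.trans : BilipEquiv d ρ → BilipEquiv ρ σ → BilipEquiv d σ := by
  rintro ⟨f, c, hf, hc, hfc⟩ ⟨g, k, hg, hk, hgk⟩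
  refine ⟨g ∘ f, k * c, hg.comp hf, mul_pos hk hc, fun x₁ x₂ => ⟨?_, ?_⟩⟩
  · calc 1 / (k * c) * d x₁ x₂ = 1 / k * (1 / c * d x₁ x₂) := by ring
      _ ≤ 1 / k * ρ (f x₁) (f x₂) := by gcongr; exact (hfc x₁ x₂).1
      _ ≤ σ (g (f x₁)) (g (f x₂)) := (hgk _ _).1
  · calc σ (g (f x₁)) (g (f x₂)) ≤ k * ρ (f x₁) (f x₂) := (hgk _ _).2
      _ ≤ k * (c * d x₁ x₂) := by gcongr; exact (hfc x₁ x₂).2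
      _ = k * c * d x₁ x₂ := by ring

end Bilipschitz

section GraphDistance

variable {V W : Type*} {Γ : SimpleGraph V} {Δ : SimpleGraph W} {K : ℕ}

theorem dist_map_le_mul_dist (hΓ : Γ.Connected) (hΔ : Δ.Connected) {f : V → W}
    (hf : ∀ x y, Γ.Adj x y → Δ.dist (f x) (f y) ≤ K) (x y : V) :
    Δ.dist (f x) (f y) ≤ K * Γ.dist x y := by
  obtain ⟨p, hp⟩ := hΓ.exists_walk_length_eq_dist x y
  rw [← hp]
  clear hp
  induction p with
  | nil => simp
  | @cons u v w huv p ih =>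
    calc Δ.dist (f u) (f w) ≤ Δ.dist (f u) (f v) + Δ.dist (f v) (f w) := hΔ.dist_triangle
      _ ≤ K + K * p.length := add_le_add (hf u v huv) ih
      _ = K * (p.cons huv).length := by rw [SimpleGraph.Walk.length_cons]; ring

theorem bilipEquiv_graphDist_of_adj (hΓ : Γ.Connected) (hΔ : Δ.Connected) {f : V → W}
    (hf : Function.Bijective f) (hK : 0 < K)
    (hmap : ∀ x y, Γ.Adj x y → Δ.dist (f x) (f y) ≤ K)
    (hcomap : ∀ x y, Δ.Adj (f x) (f y) → Γ.dist x y ≤ K) :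
    BilipEquiv (graphDist Γ) (graphDist Δ) := by
  have hK' : (0 : ℝ) < K := Nat.cast_pos.2 hK
  let e := Equiv.ofBijective f hf
  have hsymm : ∀ u v, Δ.Adj u v → Γ.dist (e.symm u) (e.symm v) ≤ K := fun u v huv =>
    hcomap _ _ (by simpa only [e, Equiv.ofBijective_apply_symm_apply] using huv)
  refine ⟨f, K, hf, hK', fun x y => ⟨?_, ?_⟩⟩
  · have hlower := dist_map_le_mul_dist hΔ hΓ hsymm (f x) (f y)
    simp only [e, Equiv.ofBijective_symm_apply_apply] at hlower
    rw [one_div, inv_mul_le_iff₀ hK']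
    simpa only [graphDist, Nat.cast_mul] using (Nat.cast_le (α := ℝ)).2 hlower
  · simpa only [graphDist, Nat.cast_mul] using
      (Nat.cast_le (α := ℝ)).2 (dist_map_le_mul_dist hΓ hΔ hmap x y)

end GraphDistance

/-- The complete infinite binary tree: its vertices are the finite binary words, and each word is
joined to its two extensions by a letter at the end. -/
def completeBinaryTree : SimpleGraph (List Bool) :=
  SimpleGraph.fromRel fun w w' => ∃ b, w' = w ++ [b]

namespace completeBinaryTree

theorem adj_append_singleton (w : List Bool) (b : Bool) :
    completeBinaryTree.Adj w (w ++ [b]) := by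
  simp [completeBinaryTree]

theorem exists_walk_append_length_eq (w e : List Bool) :
    ∃ p : completeBinaryTree.Walk w (w ++ e), p.length = e.length := by
  induction e generalizing w with
  | nil => exact ⟨SimpleGraph.Walk.nil.copy rfl w.append_nil.symm, by simp⟩
  | cons b e ih =>
    obtain ⟨p, hp⟩ := ih (w ++ [b])
    exact ⟨.cons (adj_append_singleton w b) (p.copy rfl (List.append_cons w b e).symm),
      by simp [hp]⟩

theorem dist_append_le (w e : List Bool) :
    completeBinaryTree.dist w (w ++ e) ≤ e.length := by
  obtain ⟨p, hp⟩ := exists_walk_append_length_eq w e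
  exact hp ▸ SimpleGraph.dist_le p

theorem connected : completeBinaryTree.Connected :=
  SimpleGraph.connected_iff_exists_forall_reachable _ |>.2
    ⟨[], fun w => (exists_walk_append_length_eq [] w).choose.reachable⟩

end completeBinaryTree

section RootedTree

variable {V : Type*} {Γ : SimpleGraph V} {r t u x y : V}

/-- The children of `t` when `Γ` is rooted at `r`: the neighbours of `t` farther from `r`. -/
def childSet (Γ : SimpleGraph V) (r t : V) : Set V :=
  {x | Γ.Adj t x ∧ Γ.dist r x = Γ.dist r t + 1}

/-- The descendants of `t`, itself included, when `Γ` is rooted at `r`: the vertices `x` for which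
some geodesic from `r` to `x` goes through `t`. -/
def descendantSet (Γ : SimpleGraph V) (r t : V) : Set V :=
  {x | Γ.dist r t + Γ.dist t x = Γ.dist r x}

/-- `x` and `y` are distinct children of the same vertex, when `Γ` is rooted at `r`. -/
def IsSibling (Γ : SimpleGraph V) (r x y : V) : Prop :=
  x ≠ y ∧ ∃ t, x ∈ childSet Γ r t ∧ y ∈ childSet Γ r t

theorem mem_descendantSet_self (Γ : SimpleGraph V) (r t : V) : t ∈ descendantSet Γ r t := by
  simp [descendantSet]

theorem mem_descendantSet_of_mem_childSet (hx : x ∈ childSet Γ r t) : x ∈ descendantSet Γ r t := by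
  change Γ.dist r t + Γ.dist t x = Γ.dist r x
  rw [SimpleGraph.dist_eq_one_iff_adj.2 hx.1, hx.2]

theorem descendantSet_subset_of_mem_childSet (hΓ : Γ.Connected) (hu : u ∈ childSet Γ r t) :
    descendantSet Γ r u ⊆ descendantSet Γ r t \ {t} := by
  intro x (hx : Γ.dist r u + Γ.dist u x = Γ.dist r x)
  have hut : Γ.dist t u = 1 := SimpleGraph.dist_eq_one_iff_adj.2 hu.1
  have hdepth := hu.2
  have htux := hΓ.dist_triangle (u := t) (v := u) (w := x)
  have hrtx := hΓ.dist_triangle (u := r) (v := t) (w := x)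
  refine ⟨show Γ.dist r t + Γ.dist t x = Γ.dist r x by omega, ?_⟩
  rintro rfl
  omega

theorem eq_of_mem_descendantSet (hΓ : Γ.IsTree) (ht : x ∈ descendantSet Γ r t)
    (hu : x ∈ descendantSet Γ r u) (htu : Γ.dist r t = Γ.dist r u) : t = u := by
  have geodesic : ∀ s, x ∈ descendantSet Γ r s →
      ∃ p : Γ.Walk r x, p.IsPath ∧ p.getVert (Γ.dist r s) = s := by
    intro s hs
    obtain ⟨p, hp⟩ := hΓ.connected.exists_walk_length_eq_dist r s
    obtain ⟨q, hq⟩ := hΓ.connected.exists_walk_length_eq_dist s x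
    refine ⟨p.append q, SimpleGraph.Walk.isPath_of_length_eq_dist _ ?_, ?_⟩
    · rw [SimpleGraph.Walk.length_append, hp, hq, hs]
    · simp [SimpleGraph.Walk.getVert_append, hp]
  obtain ⟨p, hp, hpt⟩ := geodesic t ht
  obtain ⟨q, hq, hqu⟩ := geodesic u hu
  rw [← hpt, ← hqu, (hΓ.existsUnique_path r x).unique hp hq, htu]

theorem IsSibling.disjoint_descendantSet (hΓ : Γ.IsTree) (h : IsSibling Γ r x y) :
    Disjoint (descendantSet Γ r x) (descendantSet Γ r y) := by
  obtain ⟨hne, t, hx, hy⟩ := h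
  exact Set.disjoint_left.2 fun z hzx hzy =>
    hne (eq_of_mem_descendantSet hΓ hzx hzy (hx.2.trans hy.2.symm))

theorem IsSibling.dist_le_two (hΓ : Γ.Connected) (h : IsSibling Γ r x y) : Γ.dist x y ≤ 2 := by
  obtain ⟨-, t, hx, hy⟩ := h
  calc Γ.dist x y ≤ Γ.dist x t + Γ.dist t y := hΓ.dist_triangle
    _ = 2 := by rw [SimpleGraph.dist_eq_one_iff_adj.2 hx.1.symm,
      SimpleGraph.dist_eq_one_iff_adj.2 hy.1]

theorem exists_mem_childSet_of_ne_root (hΓ : Γ.Connected) (hx : x ≠ r) :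
    ∃ t, x ∈ childSet Γ r t := by
  obtain ⟨p, hp⟩ := hΓ.exists_walk_length_eq_dist x r
  cases p with
  | nil => exact absurd rfl hx
  | @cons _ t _ hxt p =>
    refine ⟨t, hxt.symm, ?_⟩
    have htr := SimpleGraph.dist_le p
    have htri := hΓ.dist_triangle (u := x) (v := t) (w := r)
    rw [SimpleGraph.dist_eq_one_iff_adj.2 hxt] at htri
    rw [SimpleGraph.Walk.length_cons] at hp
    rw [Γ.dist_comm (u := r), Γ.dist_comm (u := r)]
    omega

theorem mem_childSet_or_mem_childSet_of_adj (hΓ : Γ.IsTree) (r : V) (hxy : Γ.Adj x y) :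
    y ∈ childSet Γ r x ∨ x ∈ childSet Γ r y :=
  (hΓ.dist_eq_dist_add_one_of_adj r hxy).symm.imp (⟨hxy, ·⟩) (⟨hxy.symm, ·⟩)

theorem encard_neighborSet_le_encard_childSet_add_one (hΓ : Γ.IsTree) (r t : V) :
    (Γ.neighborSet t).encard ≤ (childSet Γ r t).encard + 1 := by
  have parent_unique : (Γ.neighborSet t \ childSet Γ r t).encard ≤ 1 := by
    refine Set.encard_le_one_iff.2 fun x y hx hy => ?_
    have htx := (mem_childSet_or_mem_childSet_of_adj hΓ r hx.1).resolve_left hx.2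
    have hty := (mem_childSet_or_mem_childSet_of_adj hΓ r hy.1).resolve_left hy.2
    exact eq_of_mem_descendantSet hΓ (mem_descendantSet_of_mem_childSet htx)
      (mem_descendantSet_of_mem_childSet hty) (Nat.add_right_cancel (htx.2.symm.trans hty.2))
  calc (Γ.neighborSet t).encard
      ≤ (Γ.neighborSet t \ childSet Γ r t).encard + (childSet Γ r t).encard :=
        Set.encard_le_encard_sdiff_add_encard _ _
    _ ≤ 1 + (childSet Γ r t).encard := by gcongr
    _ = (childSet Γ r t).encard + 1 := add_comm _ _

end RootedTree

theorem exists_nodup_cons_cons_of_two_le_encard {α : Type*} {s : Set α} (hfin : s.Finite)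
    (hs : 2 ≤ s.encard) :
    ∃ a b l, (a :: b :: l).Nodup ∧ ∀ x, x ∈ a :: b :: l ↔ x ∈ s := by
  have hlength : 2 ≤ hfin.toFinset.toList.length := by
    rw [hfin.encard_eq_coe_toFinset_card] at hs
    rw [Finset.length_toList]
    exact_mod_cast hs
  obtain ⟨a, b, l, hl⟩ : ∃ a b l, hfin.toFinset.toList = a :: b :: l := by
    match hfin.toFinset.toList, hlength with
    | a :: b :: l, _ => exact ⟨a, b, l, rfl⟩
  exact ⟨a, b, l, hl ▸ hfin.toFinset.nodup_toList, fun x => by simp [← hl]⟩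

/-- A nonempty list of vertices, standing for the forest of subtrees that hang from them in a
rooted tree. -/
structure Forest (V : Type*) where
  head : V
  tail : List V

namespace Forest

variable {V : Type*}

/-- All roots of the forest. -/
def toList (F : Forest V) : List V := F.head :: F.tail

/-- The vertices of the forest hanging from the roots of `F`, when `Γ` is rooted at `r`. -/
def support (Γ : SimpleGraph V) (r : V) (F : Forest V) : Set V :=
  ⋃ t ∈ F.toList, descendantSet Γ r t

theorem head_mem_support (Γ : SimpleGraph V) (r : V) (F : Forest V) : F.head ∈ F.support Γ r :=
  Set.mem_biUnion (List.mem_cons_self ..) (mem_descendantSet_self Γ r F.head)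

theorem pairwise_isSibling_singleton (Γ : SimpleGraph V) (r t : V) :
    (Forest.mk t []).toList.Pairwise (IsSibling Γ r) :=
  List.pairwise_singleton _ _

end Forest

/-- An ordering of the children of every vertex, when `Γ` is rooted at `r` and every vertex has at
least two children. -/
structure ChildOrder {V : Type*} (Γ : SimpleGraph V) (r : V) where
  first : V → V
  second : V → V
  others : V → List V
  nodup (t : V) : (first t :: second t :: others t).Nodup
  mem_iff (t x : V) : x ∈ first t :: second t :: others t ↔ x ∈ childSet Γ r t

namespace ChildOrder

variable {V : Type*} {Γ : SimpleGraph V} {r : V}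

theorem nonempty_of_two_le_encard (hfin : ∀ t, (childSet Γ r t).Finite)
    (htwo : ∀ t, 2 ≤ (childSet Γ r t).encard) : Nonempty (ChildOrder Γ r) := by
  choose a b l hnodup hmem using fun t =>
    exists_nodup_cons_cons_of_two_le_encard (hfin t) (htwo t)
  exact ⟨⟨a, b, l, hnodup, hmem⟩⟩

variable (C : ChildOrder Γ r) {F : Forest V}

/-- The children of `t`, in order. -/
def children (t : V) : List V := C.first t :: C.second t :: C.others t

theorem mem_children {t x : V} : x ∈ C.children t ↔ x ∈ childSet Γ r t := C.mem_iff t x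

theorem nodup_children (t : V) : (C.children t).Nodup := C.nodup t

theorem length_children (t : V) : ((C.children t).length : ℕ∞) = (childSet Γ r t).encard := by
  classical
  have hset : ((C.children t).toFinset : Set V) = childSet Γ r t :=
    Set.ext fun x => List.mem_toFinset.trans C.mem_children
  rw [← hset, Set.encard_coe_eq_coe_finsetCard, List.toFinset_card_of_nodup (C.nodup_children t)]

theorem pairwise_isSibling_children (t : V) : (C.children t).Pairwise (IsSibling Γ r) :=
  (C.nodup_children t).imp_of_mem fun hx hy hne =>
    ⟨hne, t, C.mem_children.1 hx, C.mem_children.1 hy⟩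

/-- The two forests into which a forest of siblings falls when its first root is removed. They are
those of the children and of the remaining siblings of that root, unless there is no remaining
sibling; then the children are shared between the two. -/
def split : Forest V → Bool → Forest V
  | ⟨t, []⟩, false => ⟨C.first t, []⟩
  | ⟨t, []⟩, true => ⟨C.second t, C.others t⟩
  | ⟨t, _ :: _⟩, false => ⟨C.first t, C.second t :: C.others t⟩
  | ⟨_, u :: l⟩, true => ⟨u, l⟩

/-- The first root of the forest reached from `F` by splitting along the letters of `w`. -/
def label (F : Forest V) (w : List Bool) : V := (w.foldl C.split F).head

theorem split_sublist (F : Forest V) (b : Bool) :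
    (C.split F b).toList.Sublist F.tail ∨ (C.split F b).toList.Sublist (C.children F.head) := by
  match F, b with
  | ⟨t, []⟩, false => exact .inr (by simp [split, Forest.toList, children])
  | ⟨t, []⟩, true => exact .inr (List.sublist_cons_self ..)
  | ⟨t, _ :: _⟩, false => exact .inr (List.Sublist.refl _)
  | ⟨_, u :: l⟩, true => exact .inl (List.Sublist.refl _)

theorem pairwise_isSibling_split (hF : F.toList.Pairwise (IsSibling Γ r)) (b : Bool) :
    (C.split F b).toList.Pairwise (IsSibling Γ r) :=
  (C.split_sublist F b).elim (fun h => hF.of_cons.sublist h)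
    (fun h => (C.pairwise_isSibling_children F.head).sublist h)

theorem pairwise_isSibling_foldl_split (hF : F.toList.Pairwise (IsSibling Γ r)) (w : List Bool) :
    (w.foldl C.split F).toList.Pairwise (IsSibling Γ r) :=
  List.foldlRecOn (motive := fun G => G.toList.Pairwise (IsSibling Γ r)) w C.split hF
    fun _ hG b _ => C.pairwise_isSibling_split hG b

theorem mem_tail_or_mem_childSet_of_mem_split {b : Bool} {x : V}
    (hx : x ∈ (C.split F b).toList) : x ∈ F.tail ∨ x ∈ childSet Γ r F.head :=
  (C.split_sublist F b).imp (fun h => h.subset hx) (fun h => C.mem_children.1 (h.subset hx))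

theorem support_split_subset (hΓ : Γ.IsTree) (hF : F.toList.Pairwise (IsSibling Γ r)) (b : Bool) :
    (C.split F b).support Γ r ⊆ F.support Γ r \ {F.head} := by
  refine Set.iUnion₂_subset fun t ht => ?_
  rcases C.mem_tail_or_mem_childSet_of_mem_split ht with htail | hchild
  · refine Set.subset_sdiff_singleton
      (Set.subset_biUnion_of_mem (u := descendantSet Γ r) (List.mem_cons_of_mem _ htail)) ?_
    have hsib : IsSibling Γ r F.head t := List.rel_of_pairwise_cons hF htail
    exact Set.disjoint_left.1 (hsib.disjoint_descendantSet hΓ) (mem_descendantSet_self Γ r F.head)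
  · exact (descendantSet_subset_of_mem_childSet hΓ.connected hchild).trans
      (Set.sdiff_subset_sdiff_left
        (Set.subset_biUnion_of_mem (u := descendantSet Γ r) (List.mem_cons_self ..)))

theorem disjoint_support_split (hΓ : Γ.IsTree) (hF : F.toList.Pairwise (IsSibling Γ r)) :
    Disjoint ((C.split F false).support Γ r) ((C.split F true).support Γ r) := by
  refine Set.disjoint_iUnion₂_left.2 fun x hx => Set.disjoint_iUnion₂_right.2 fun y hy => ?_
  match F with
  | ⟨t, []⟩ =>
    obtain rfl : x = C.first t := by simpa [split, Forest.toList] using hx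
    exact (List.rel_of_pairwise_cons (C.pairwise_isSibling_children t) hy).disjoint_descendantSet hΓ
  | ⟨t, u :: l⟩ =>
    have hty : IsSibling Γ r t y := List.rel_of_pairwise_cons hF hy
    exact (hty.disjoint_descendantSet hΓ).mono_left
      ((descendantSet_subset_of_mem_childSet hΓ.connected (C.mem_children.1 hx)).trans
        Set.sdiff_subset)

theorem pairwise_disjoint_support_split (hΓ : Γ.IsTree)
    (hF : F.toList.Pairwise (IsSibling Γ r)) :
    Pairwise (Function.onFun Disjoint fun b => (C.split F b).support Γ r)
  | false, true, _ => C.disjoint_support_split hΓ hF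
  | true, false, _ => (C.disjoint_support_split hΓ hF).symm

theorem label_mem_support (hΓ : Γ.IsTree) (hF : F.toList.Pairwise (IsSibling Γ r))
    (w : List Bool) : C.label F w ∈ F.support Γ r := by
  induction w generalizing F with
  | nil => exact F.head_mem_support Γ r
  | cons b w ih =>
    exact (C.support_split_subset hΓ hF b (ih (C.pairwise_isSibling_split hF b))).1

theorem label_cons_ne_head (hΓ : Γ.IsTree) (hF : F.toList.Pairwise (IsSibling Γ r)) (b : Bool)
    (w : List Bool) : C.label F (b :: w) ≠ F.head :=
  (C.support_split_subset hΓ hF b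
    (C.label_mem_support hΓ (C.pairwise_isSibling_split hF b) w)).2

theorem label_injective (hΓ : Γ.IsTree) (hF : F.toList.Pairwise (IsSibling Γ r)) :
    Function.Injective (C.label F) := by
  intro w w' h
  induction w generalizing F w' with
  | nil =>
    cases w' with
    | nil => rfl
    | cons b' w' => exact absurd h.symm (C.label_cons_ne_head hΓ hF b' w')
  | cons b w ih =>
    cases w' with
    | nil => exact absurd h (C.label_cons_ne_head hΓ hF b w)
    | cons b' w' =>
      have hmem := C.label_mem_support hΓ (C.pairwise_isSibling_split hF b) w
      have hmem' := C.label_mem_support hΓ (C.pairwise_isSibling_split hF b') w'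
      have hlabel : C.label (C.split F b) w = C.label (C.split F b') w' := h
      rw [← hlabel] at hmem'
      obtain rfl : b = b' := (C.pairwise_disjoint_support_split hΓ hF).eq
        (Set.not_disjoint_iff.2 ⟨_, hmem, hmem'⟩)
      rw [ih (C.pairwise_isSibling_split hF b) hlabel]

theorem exists_label_eq_of_mem_toList (F : Forest V) {y : V} (hy : y ∈ F.toList) :
    ∃ w, w.length < F.toList.length ∧ C.label F w = y := by
  obtain ⟨t, l⟩ := F
  induction l generalizing t with
  | nil => exact ⟨[], by simp [Forest.toList], (List.mem_singleton.1 hy).symm⟩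
  | cons u l ih =>
    rcases List.mem_cons.1 hy with rfl | hy
    · exact ⟨[], by simp [Forest.toList], rfl⟩
    · obtain ⟨w, hw, hlabel⟩ := ih u hy
      exact ⟨true :: w, Nat.succ_lt_succ hw, hlabel⟩

theorem exists_mem_split_of_mem_children (F : Forest V) {y : V} (hy : y ∈ C.children F.head) :
    ∃ b, y ∈ (C.split F b).toList ∧ (C.split F b).toList.length ≤ (C.children F.head).length := by
  match F with
  | ⟨t, []⟩ =>
    rcases List.mem_cons.1 hy with rfl | hy
    · exact ⟨false, by simp [split, Forest.toList], by simp [split, Forest.toList, children]⟩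
    · exact ⟨true, hy, Nat.le_succ _⟩
  | ⟨t, u :: l⟩ => exact ⟨false, hy, le_rfl⟩

theorem exists_label_eq_of_mem_childSet {F : Forest V} {y : V} (hy : y ∈ childSet Γ r F.head) :
    ∃ w, w.length ≤ (C.children F.head).length ∧ C.label F w = y := by
  obtain ⟨b, hb, hlength⟩ := C.exists_mem_split_of_mem_children F (C.mem_children.2 hy)
  obtain ⟨w, hw, hlabel⟩ := C.exists_label_eq_of_mem_toList _ hb
  exact ⟨b :: w, hw.trans_le hlength, hlabel⟩

/-- The labelling of the complete binary tree by the vertices of the tree rooted at `r`. -/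
def code (w : List Bool) : V := C.label ⟨r, []⟩ w

theorem exists_code_append_eq_of_mem_childSet {w : List Bool} {y : V}
    (hy : y ∈ childSet Γ r (C.code w)) :
    ∃ e, e.length ≤ (C.children (C.code w)).length ∧ C.code (w ++ e) = y := by
  simpa only [code, label, List.foldl_append] using C.exists_label_eq_of_mem_childSet hy

theorem code_surjective (hΓ : Γ.Connected) : Function.Surjective C.code := by
  intro x
  induction hn : Γ.dist r x generalizing x with
  | zero => exact ⟨[], hΓ.dist_eq_zero_iff.1 hn⟩
  | succ n ih =>
    have hx : x ≠ r := by
      rintro rfl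
      simp at hn
    obtain ⟨t, ht⟩ := exists_mem_childSet_of_ne_root hΓ hx
    obtain ⟨w, rfl⟩ := ih t (Nat.add_right_cancel (ht.2.symm.trans hn))
    obtain ⟨e, -, he⟩ := C.exists_code_append_eq_of_mem_childSet ht
    exact ⟨w ++ e, he⟩

theorem code_bijective (hΓ : Γ.IsTree) : Function.Bijective C.code :=
  ⟨C.label_injective hΓ (Forest.pairwise_isSibling_singleton Γ r r), C.code_surjective hΓ.connected⟩

theorem dist_head_split_le_two (hΓ : Γ.Connected) (hF : F.toList.Pairwise (IsSibling Γ r))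
    (b : Bool) : Γ.dist F.head (C.split F b).head ≤ 2 := by
  rcases C.mem_tail_or_mem_childSet_of_mem_split
    (List.mem_cons_self : (C.split F b).head ∈ (C.split F b).toList) with htail | hchild
  · exact (List.rel_of_pairwise_cons hF htail).dist_le_two hΓ
  · exact (SimpleGraph.dist_eq_one_iff_adj.2 hchild.1).trans_le one_le_two

theorem dist_code_le_two_of_adj (hΓ : Γ.Connected) {w w' : List Bool}
    (hadj : completeBinaryTree.Adj w w') : Γ.dist (C.code w) (C.code w') ≤ 2 := by
  have hextend (w : List Bool) (b : Bool) : Γ.dist (C.code w) (C.code (w ++ [b])) ≤ 2 := by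
    have hw := C.pairwise_isSibling_foldl_split (Forest.pairwise_isSibling_singleton Γ r r) w
    simpa only [code, label, List.foldl_append, List.foldl_cons, List.foldl_nil] using
      C.dist_head_split_le_two hΓ hw b
  obtain ⟨-, ⟨b, rfl⟩ | ⟨b, rfl⟩⟩ := hadj
  · exact hextend w b
  · exact Γ.dist_comm ▸ hextend w' b

theorem dist_le_of_adj_code (hΓ : Γ.IsTree) {D : ℕ} (hD : ∀ t, (C.children t).length ≤ D)
    {w w' : List Bool} (hadj : Γ.Adj (C.code w) (C.code w')) :
    completeBinaryTree.dist w w' ≤ D := by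
  have hdescend {w w' : List Bool} (h : C.code w' ∈ childSet Γ r (C.code w)) :
      completeBinaryTree.dist w w' ≤ D := by
    obtain ⟨e, he, heq⟩ := C.exists_code_append_eq_of_mem_childSet h
    obtain rfl : w ++ e = w' := (C.code_bijective hΓ).injective heq
    exact (completeBinaryTree.dist_append_le w e).trans (he.trans (hD _))
  rcases mem_childSet_or_mem_childSet_of_adj hΓ r hadj with h | h
  · exact hdescend h
  · exact SimpleGraph.dist_comm.trans_le (hdescend h)

theorem bilipEquiv_completeBinaryTree (hΓ : Γ.IsTree) {D : ℕ}
    (hD : ∀ t, (C.children t).length ≤ D) :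
    BilipEquiv (graphDist completeBinaryTree) (graphDist Γ) := by
  have htwo : 2 ≤ D := le_trans (by simp [children]) (hD r)
  exact bilipEquiv_graphDist_of_adj completeBinaryTree.connected hΓ.connected (C.code_bijective hΓ)
    (two_pos.trans_le htwo) (fun _ _ h => (C.dist_code_le_two_of_adj hΓ.connected h).trans htwo)
    (fun _ _ h => C.dist_le_of_adj_code hΓ hD h)

end ChildOrder

theorem completeBinaryTree.bilipEquiv_of_isTree {V : Type*} {Γ : SimpleGraph V}
    (hΓ : Γ.IsTree) {D : ℕ}
    (hdeg : ∀ v, 3 ≤ (Γ.neighborSet v).encard ∧ (Γ.neighborSet v).encard ≤ D) :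
    BilipEquiv (graphDist completeBinaryTree) (graphDist Γ) := by
  obtain ⟨r⟩ := hΓ.connected.nonempty
  have hle (t : V) : (childSet Γ r t).encard ≤ D :=
    (Set.encard_le_encard fun _ hx => hx.1).trans (hdeg t).2
  have htwo (t : V) : 2 ≤ (childSet Γ r t).encard := by
    have hthree : (2 : ℕ∞) + 1 ≤ (childSet Γ r t).encard + 1 :=
      (hdeg t).1.trans (encard_neighborSet_le_encard_childSet_add_one hΓ r t)
    exact (ENat.add_le_add_iff_right ENat.one_ne_top).1 hthree
  obtain ⟨C⟩ :=
    ChildOrder.nonempty_of_two_le_encard (fun t => Set.finite_of_encard_le_coe (hle t)) htwo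
  exact C.bilipEquiv_completeBinaryTree hΓ fun t =>
    Nat.cast_le.1 ((C.length_children t).trans_le (hle t))

/-- Two trees all of whose vertices have degree at least three and uniformly bounded
degree are bilipschitz equivalent. -/
theorem trees_bilipschitz_equivalent {V₁ : Type*} {V₂ : Type*}
    (Λ₁ : SimpleGraph V₁) (Λ₂ : SimpleGraph V₂)
    (h₁ : Λ₁.IsTree) (h₂ : Λ₂.IsTree) (D : ℕ)
    (hdeg₁ : ∀ v : V₁, 3 ≤ (Λ₁.neighborSet v).encard ∧ (Λ₁.neighborSet v).encard ≤ D)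
    (hdeg₂ : ∀ v : V₂, 3 ≤ (Λ₂.neighborSet v).encard ∧ (Λ₂.neighborSet v).encard ≤ D) :
    BilipEquiv (graphDist Λ₁) (graphDist Λ₂) := by
  exact (completeBinaryTree.bilipEquiv_of_isTree h₁ hdeg₁).symm.trans
    (completeBinaryTree.bilipEquiv_of_isTree h₂ hdeg₂)
end

section
/- Let Λ be a tree with a distinguished root vertex λ, and let r ≥ 3 be an integer. If 2 ≤ deg(λ) ≤ r − 1 and every vertex of Λ other than λ has degree at least 3, then there exist a perimeter P of Λ of radius at most r and a function d : P → ℕ⁺ such that d(p) ≤ deg(p) − 1 for every p ∈ P and Σ_{p ∈ P} d(p) = r. -/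
/-!
A non-root vertex `v` can carry any weight `N ≥ 1`: if `N ≤ deg v - 1`, put all of it on `v`;
otherwise `v` has fewer than `N` children but at least two, so `N` can be split into positive
parts, one for each child, all smaller than `N`. Each step down the tree thus lowers the weight,
which is why a perimeter of weight `N` above `v` has radius at most `N - 1` when measured from `v`.
Distributing `r` among the children of the root gives the perimeter of radius at most `r`.
-/

open scoped Pointwise

/-- In a tree with root `root`, `treeLE Γ root u v` says that the unique shortest path
from `root` to `v` traverses `u` (i.e. `u ≼ v` in the tree order). -/
def treeLE {V : Type*} (Γ : SimpleGraph V) (root u v : V) : Prop :=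
  Γ.dist root u + Γ.dist u v = Γ.dist root v

open SimpleGraph

section WeightedPerimeter

variable {V : Type*} {Γ : SimpleGraph V} {root u v w : V}

theorem treeLE.refl (Γ : SimpleGraph V) (root v : V) : treeLE Γ root v v := by
  simp [treeLE]

theorem treeLE.trans (hc : Γ.Connected) (huv : treeLE Γ root u v) (hvw : treeLE Γ root v w) :
    treeLE Γ root u w := by
  have := hc.dist_triangle (u := u) (v := v) (w := w)
  have := hc.dist_triangle (u := root) (v := u) (w := w)
  unfold treeLE at *
  lia

theorem treeLE.swap (h : treeLE Γ root u v) : treeLE Γ v u root := by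
  unfold treeLE at *
  rw [dist_comm (u := v) (v := u), dist_comm (u := u) (v := root),
    dist_comm (u := v) (v := root), add_comm, h]

theorem treeLE_root (Γ : SimpleGraph V) (root v : V) : treeLE Γ root root v := by
  simp [treeLE]

theorem treeLE.exists_isPath_getVert_eq (hc : Γ.Connected) (h : treeLE Γ root u v) :
    ∃ p : Γ.Walk root v, p.IsPath ∧ p.getVert (Γ.dist root u) = u := by
  obtain ⟨p, hp⟩ := hc.exists_walk_length_eq_dist root u
  obtain ⟨q, hq⟩ := hc.exists_walk_length_eq_dist u v
  refine ⟨p.append q, Walk.isPath_of_length_eq_dist _ ?_, ?_⟩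
  · rw [Walk.length_append, hp, hq, h]
  · simp [Walk.getVert_append, hp]

theorem treeLE.eq_of_dist_eq (hT : Γ.IsTree) (hu : treeLE Γ root u w) (hv : treeLE Γ root v w)
    (hdist : Γ.dist root u = Γ.dist root v) : u = v := by
  obtain ⟨p, hp, hpu⟩ := hu.exists_isPath_getVert_eq hT.connected
  obtain ⟨q, hq, hqv⟩ := hv.exists_isPath_getVert_eq hT.connected
  obtain rfl : p = q :=
    congrArg Subtype.val ((hT.isAcyclic.subsingleton_path root w).elim ⟨p, hp⟩ ⟨q, hq⟩)
  rw [← hpu, ← hqv, hdist]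

/-- The children of `v` in the tree rooted at `root`: the neighbours of `v` lying above it. -/
def treeChildren (Γ : SimpleGraph V) (root v : V) : Set V :=
  {c | Γ.Adj v c ∧ treeLE Γ root v c}

theorem treeChildren_root (Γ : SimpleGraph V) (root : V) :
    treeChildren Γ root root = Γ.neighborSet root :=
  Set.ext fun c => and_iff_left (treeLE_root Γ root c)

theorem dist_of_mem_treeChildren {c : V} (hcv : c ∈ treeChildren Γ root v) :
    Γ.dist root c = Γ.dist root v + 1 := by
  rw [← hcv.2, dist_eq_one_iff_adj.2 hcv.1]

theorem ne_root_of_mem_treeChildren {c : V} (hcv : c ∈ treeChildren Γ root v) : c ≠ root := by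
  rintro rfl
  simpa using dist_of_mem_treeChildren hcv

theorem exists_mem_treeChildren_treeLE (hc : Γ.Connected) (h : treeLE Γ root v u) (hne : v ≠ u) :
    ∃ c ∈ treeChildren Γ root v, treeLE Γ root c u := by
  obtain ⟨p, hp⟩ := hc.exists_walk_length_eq_dist v u
  cases p with
  | nil => exact absurd rfl hne
  | @cons _ c _ hadj q =>
    have hq := dist_le q
    have hvc := dist_eq_one_iff_adj.2 hadj
    have := hc.dist_triangle (u := root) (v := c) (w := u)
    have := hc.dist_triangle (u := root) (v := v) (w := c)
    rw [Walk.length_cons] at hp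
    unfold treeLE at h
    exact ⟨c, ⟨hadj, by unfold treeLE; lia⟩, by unfold treeLE; lia⟩

theorem exists_treeChildren_eq_sdiff_singleton (hT : Γ.IsTree) (hv : v ≠ root) :
    ∃ c ∈ Γ.neighborSet v, treeChildren Γ root v = Γ.neighborSet v \ {c} := by
  -- The parent of `v` is the first step from `v` towards `root`.
  obtain ⟨c, ⟨hvc, -⟩, hcroot⟩ :=
    exists_mem_treeChildren_treeLE hT.connected (treeLE_root Γ v root) hv
  have hcv : treeLE Γ root c v := hcroot.swap
  have hdist_c : Γ.dist root v = Γ.dist root c + 1 := by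
    rw [← hcv, dist_eq_one_iff_adj.2 hvc.symm]
  refine ⟨c, hvc, Set.ext fun x => ⟨fun hx => ⟨hx.1, ?_⟩, fun ⟨hvx, hxc⟩ => ⟨hvx, ?_⟩⟩⟩
  · rintro rfl
    have := dist_of_mem_treeChildren hx
    lia
  · rcases hT.dist_eq_dist_add_one_of_adj root hvx with hdist_x | hdist_x
    · have hxv : treeLE Γ root x v := by
        rw [treeLE, dist_eq_one_iff_adj.2 hvx.symm, hdist_x]
      exact absurd (hxv.eq_of_dist_eq hT hcv (by lia)) hxc
    · rw [treeLE, dist_eq_one_iff_adj.2 hvx, hdist_x]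

theorem encard_treeChildren (hT : Γ.IsTree) (hv : v ≠ root) :
    (treeChildren Γ root v).encard = (Γ.neighborSet v).encard - 1 := by
  obtain ⟨c, hc, heq⟩ := exists_treeChildren_eq_sdiff_singleton hT hv
  rw [heq, Set.encard_sdiff_singleton_of_mem hc]

theorem eq_of_mem_treeChildren_of_treeLE (hT : Γ.IsTree) {c c' : V}
    (hc : c ∈ treeChildren Γ root v) (hc' : c' ∈ treeChildren Γ root v)
    (hcw : treeLE Γ root c w) (hcw' : treeLE Γ root c' w) : c = c' :=
  hcw.eq_of_dist_eq hT hcw' <| by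
    rw [dist_of_mem_treeChildren hc, dist_of_mem_treeChildren hc']

theorem mem_support_finsetSum_iff {ι α M : Type*} [AddCommMonoid M] [PartialOrder M]
    [CanonicallyOrderedAdd M] {s : Finset ι} {g : ι → α →₀ M} {a : α} :
    a ∈ (∑ i ∈ s, g i).support ↔ ∃ i ∈ s, a ∈ (g i).support := by
  simp [Finsupp.finsetSum_apply]

/-- `IsWeightedPerimeter Γ root v R f` says that the support of `f` is a perimeter of radius at
most `R` of the subtree above `v`, with distances measured from `v`, and that
`1 ≤ f p ≤ deg p - 1` on it. Packing the perimeter `P` and the function `d : P → ℕ⁺` into one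
finitely supported `f : V →₀ ℕ` makes gluing perimeters an addition; the total weight is
`f.degree`. Unlike in a perimeter proper, the support may be `{root}`. -/
structure IsWeightedPerimeter (Γ : SimpleGraph V) (root v : V) (R : ℕ) (f : V →₀ ℕ) : Prop where
  treeLE_of_mem : ∀ p ∈ f.support, treeLE Γ root v p
  isAntichain : IsAntichain (treeLE Γ root) (f.support : Set V)
  exists_treeLE : ∀ u, treeLE Γ root v u → R ≤ Γ.dist v u → ∃ p ∈ f.support, treeLE Γ root p u
  le_encard_sub_one : ∀ p ∈ f.support, (f p : ℕ∞) ≤ (Γ.neighborSet p).encard - 1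

namespace IsWeightedPerimeter

theorem mono {R R' : ℕ} {f : V →₀ ℕ} (h : IsWeightedPerimeter Γ root v R f) (hR : R ≤ R') :
    IsWeightedPerimeter Γ root v R' f where
  __ := h
  exists_treeLE u hvu hu := h.exists_treeLE u hvu (hR.trans hu)

theorem single {N : ℕ} (hN : N ≠ 0) (hdeg : (N : ℕ∞) ≤ (Γ.neighborSet v).encard - 1) :
    IsWeightedPerimeter Γ root v 0 (Finsupp.single v N) where
  treeLE_of_mem := by simp [Finsupp.support_single, hN, treeLE.refl]
  isAntichain := by simp [Finsupp.support_single, hN]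
  exists_treeLE u hvu _ := ⟨v, by simp [hN], hvu⟩
  le_encard_sub_one := by simpa [Finsupp.support_single, hN] using hdeg

theorem support_ne_singleton {R : ℕ} {f : V →₀ ℕ} (hf : IsWeightedPerimeter Γ root v R f)
    (hne : (Γ.neighborSet u).Nonempty) (hle : (Γ.neighborSet u).encard ≤ f.degree) :
    f.support ≠ {u} := by
  intro hsupport
  have hu_le := hf.le_encard_sub_one u (by simp [hsupport])
  have hpos := Set.encard_pos.2 hne
  rw [Finsupp.degree_apply, hsupport, Finset.sum_singleton] at hle
  lift (Γ.neighborSet u).encard to ℕ using ne_top_of_le_ne_top (ENat.natCast_ne_top _) hle with n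
  norm_cast at hle hu_le hpos
  lia

section Gluing

variable {C : Finset V} {R : ℕ} {f : V → V →₀ ℕ}

theorem eq_of_treeLE_of_mem_support (hT : Γ.IsTree) (hC : ↑C = treeChildren Γ root v)
    (hf : ∀ c ∈ C, IsWeightedPerimeter Γ root c R (f c)) {c c' p p' : V} (hc : c ∈ C)
    (hc' : c' ∈ C) (hp : p ∈ (f c).support) (hp' : p' ∈ (f c').support)
    (hpp' : treeLE Γ root p p') : c = c' :=
  eq_of_mem_treeChildren_of_treeLE hT (hC.subset hc) (hC.subset hc')
    (((hf c hc).treeLE_of_mem p hp).trans hT.connected hpp') ((hf c' hc').treeLE_of_mem p' hp')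

theorem sum_apply_eq (hT : Γ.IsTree) (hC : ↑C = treeChildren Γ root v)
    (hf : ∀ c ∈ C, IsWeightedPerimeter Γ root c R (f c)) {c p : V} (hc : c ∈ C)
    (hp : p ∈ (f c).support) : (∑ b ∈ C, f b) p = f c p := by
  rw [Finsupp.finsetSum_apply]
  refine Finset.sum_eq_single_of_mem c hc fun b hb hbc => ?_
  by_contra hpb
  exact hbc <| eq_of_treeLE_of_mem_support hT hC hf hb hc (Finsupp.mem_support_iff.2 hpb) hp
    (treeLE.refl Γ root p)

theorem sum_treeChildren (hT : Γ.IsTree) (hC : ↑C = treeChildren Γ root v)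
    (hf : ∀ c ∈ C, IsWeightedPerimeter Γ root c R (f c)) :
    IsWeightedPerimeter Γ root v (R + 1) (∑ c ∈ C, f c) where
  treeLE_of_mem p hp := by
    obtain ⟨c, hc, hpc⟩ := mem_support_finsetSum_iff.1 hp
    have hcv : c ∈ treeChildren Γ root v := hC.subset hc
    exact hcv.2.trans hT.connected ((hf c hc).treeLE_of_mem p hpc)
  isAntichain p hp p' hp' hne hle := by
    obtain ⟨c, hc, hpc⟩ := mem_support_finsetSum_iff.1 hp
    obtain ⟨c', hc', hpc'⟩ := mem_support_finsetSum_iff.1 hp'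
    obtain rfl := eq_of_treeLE_of_mem_support hT hC hf hc hc' hpc hpc' hle
    exact (hf c hc).isAntichain hpc hpc' hne hle
  exists_treeLE u hvu hu := by
    have hne : v ≠ u := by
      rintro rfl
      simp at hu
    obtain ⟨c, hcv, hcu⟩ := exists_mem_treeChildren_treeLE hT.connected hvu hne
    have hc : c ∈ C := by rwa [← Finset.mem_coe, hC]
    have hRcu : R ≤ Γ.dist c u := by
      have := dist_of_mem_treeChildren hcv
      unfold treeLE at hvu hcu
      lia
    obtain ⟨p, hp, hpu⟩ := (hf c hc).exists_treeLE u hcu hRcu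
    exact ⟨p, mem_support_finsetSum_iff.2 ⟨c, hc, hp⟩, hpu⟩
  le_encard_sub_one p hp := by
    obtain ⟨c, hc, hpc⟩ := mem_support_finsetSum_iff.1 hp
    rw [sum_apply_eq hT hC hf hc hpc]
    exact (hf c hc).le_encard_sub_one p hpc

end Gluing

end IsWeightedPerimeter

theorem exists_sum_add_one_eq {ι : Type*} {s : Finset ι} (hs : s.Nonempty) {N : ℕ}
    (hN : s.card ≤ N) :
    ∃ n : ι → ℕ, (∀ i, n i ≤ N - s.card) ∧ ∑ i ∈ s, (n i + 1) = N := by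
  classical
  obtain ⟨i₀, hi₀⟩ := hs
  refine ⟨Pi.single i₀ (N - s.card), fun i => ?_, ?_⟩
  · rw [Pi.single_apply]
    split_ifs <;> simp
  · rw [Finset.sum_add_distrib, Finset.sum_pi_single' i₀, if_pos hi₀, Finset.sum_const,
      smul_eq_mul, mul_one, Nat.sub_add_cancel hN]

theorem exists_isWeightedPerimeter_of_treeChildren (hT : Γ.IsTree) {C : Finset V}
    (hC : ↑C = treeChildren Γ root v) (hne : C.Nonempty) {N : ℕ} (hN : C.card ≤ N)
    (h : ∀ c ∈ C, ∀ m ≤ N - C.card, ∃ f, IsWeightedPerimeter Γ root c m f ∧ f.degree = m + 1) :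
    ∃ f, IsWeightedPerimeter Γ root v (N - C.card + 1) f ∧ f.degree = N := by
  obtain ⟨n, hn, hsum⟩ := exists_sum_add_one_eq hne hN
  choose! f hf hdegree using fun c hc => h c hc (n c) (hn c)
  refine ⟨∑ c ∈ C, f c, .sum_treeChildren hT hC fun c hc => (hf c hc).mono (hn c), ?_⟩
  rw [map_sum, Finset.sum_congr rfl hdegree, hsum]

theorem exists_isWeightedPerimeter_degree_eq_add_one (hT : Γ.IsTree)
    (hdeg : ∀ v, v ≠ root → 3 ≤ (Γ.neighborSet v).encard) (hv : v ≠ root) (N : ℕ) :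
    ∃ f, IsWeightedPerimeter Γ root v N f ∧ f.degree = N + 1 := by
  induction N using Nat.strong_induction_on generalizing v with
  | _ N ih =>
    by_cases hN : ((N + 1 : ℕ) : ℕ∞) ≤ (Γ.neighborSet v).encard - 1
    · exact ⟨_, (IsWeightedPerimeter.single N.succ_ne_zero hN).mono N.zero_le,
        Finsupp.degree_single v (N + 1)⟩
    · rw [← encard_treeChildren hT hv, not_le] at hN
      obtain ⟨C, hC⟩ := (Set.finite_of_encard_le_coe hN.le).exists_finset_coe
      have hcard_ge : 2 ≤ C.card := by
        have : (2 : ℕ∞) ≤ (treeChildren Γ root v).encard := by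
          rw [encard_treeChildren hT hv]
          exact tsub_le_tsub_right (hdeg v hv) 1
        rw [← hC, Set.encard_coe_eq_coe_finsetCard] at this
        exact_mod_cast this
      rw [← hC, Set.encard_coe_eq_coe_finsetCard, Nat.cast_lt] at hN
      obtain ⟨f, hf, hdegree⟩ := exists_isWeightedPerimeter_of_treeChildren hT hC
        (Finset.card_pos.1 (by lia)) hN.le fun c hc m hm =>
          ih m (by lia) (ne_root_of_mem_treeChildren (hC.subset hc))
      exact ⟨f, hf.mono (by lia), hdegree⟩

end WeightedPerimeter

theorem perimeter_lemma_general {V : Type*} (Λ : SimpleGraph V) (root : V) (hT : Λ.IsTree)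
    (r : ℕ) (hroot_nonempty : (Λ.neighborSet root).Nonempty)
    (hroot_ub : (Λ.neighborSet root).encard ≤ r)
    (hdeg : ∀ v : V, v ≠ root → 3 ≤ (Λ.neighborSet v).encard) :
    ∃ (P : Finset V) (d : V → ℕ),
      (P : Set V) ≠ {root} ∧
      (∀ p ∈ P, ∀ p' ∈ P, treeLE Λ root p p' → p = p') ∧
      (∀ u : V, r ≤ Λ.dist root u → ∃ p ∈ P, treeLE Λ root p u) ∧
      (∀ p ∈ P, 1 ≤ d p ∧ (d p : ℕ∞) ≤ (Λ.neighborSet p).encard - 1) ∧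
      ∑ p ∈ P, d p = r := by
  obtain ⟨C, hC⟩ := (Set.finite_of_encard_le_coe hroot_ub).exists_finset_coe
  have hC_root : ↑C = treeChildren Λ root root := hC.trans (treeChildren_root Λ root).symm
  have hC_nonempty : C.Nonempty := by rwa [← Finset.coe_nonempty, hC]
  have hC_card : C.card ≤ r := by
    rwa [← hC, Set.encard_coe_eq_coe_finsetCard, Nat.cast_le] at hroot_ub
  obtain ⟨f, hf, hdegree⟩ :=
    exists_isWeightedPerimeter_of_treeChildren hT hC_root hC_nonempty hC_card fun c hc m _ =>
      exists_isWeightedPerimeter_degree_eq_add_one hT hdeg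
        (ne_root_of_mem_treeChildren (hC_root.subset hc)) m
  have hradius : r - C.card + 1 ≤ r := by
    have := hC_nonempty.card_pos
    lia
  have hsupport : f.support ≠ {root} := hf.support_ne_singleton hroot_nonempty (hdegree ▸ hroot_ub)
  exact ⟨f.support, f, by exact_mod_cast hsupport, fun p hp p' hp' => hf.isAntichain.eq hp hp',
    fun u hu => hf.exists_treeLE u (treeLE_root Λ root u) (hradius.trans hu),
    fun p hp => ⟨Nat.one_le_iff_ne_zero.2 (Finsupp.mem_support_iff.1 hp),
      hf.le_encard_sub_one p hp⟩, hdegree⟩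

/-- The perimeter lemma: if `Λ` is a tree with root of degree between `2` and `r-1` and all
other vertices of degree at least `3`, then there is a perimeter `P` of radius at most `r`
and a function `d : P → ℕ⁺` with `d p ≤ deg p − 1` and `∑_{p ∈ P} d p = r`. -/
theorem perimeter_lemma {V : Type*} (Λ : SimpleGraph V) (root : V) (hT : Λ.IsTree)
    (r : ℕ) (hr : 3 ≤ r)
    (hroot_lb : 2 ≤ (Λ.neighborSet root).encard)
    (hroot_ub : (Λ.neighborSet root).encard ≤ ((r - 1 : ℕ) : ℕ∞))
    (hdeg : ∀ v : V, v ≠ root → 3 ≤ (Λ.neighborSet v).encard) :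
    ∃ (P : Finset V) (d : V → ℕ),
      (P : Set V) ≠ {root} ∧
      (∀ p ∈ P, ∀ p' ∈ P, treeLE Λ root p p' → p = p') ∧
      (∀ u : V, r ≤ Λ.dist root u → ∃ p ∈ P, treeLE Λ root p u) ∧
      (∀ p ∈ P, 1 ≤ d p ∧ (d p : ℕ∞) ≤ (Λ.neighborSet p).encard - 1) ∧
      ∑ p ∈ P, d p = r := by
  exact perimeter_lemma_general Λ root hT r (Set.encard_pos.1 (two_pos.trans_le hroot_lb))
    (hroot_ub.trans (Nat.cast_le.2 (r.sub_le 1))) hdeg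
end

section
/- Let H and G be finitely generated groups, let U = U⁻¹ be a finite generating set of H, and suppose H acts on G by a translation-like action *. Then there is a finite generating set W of G such that for all g ∈ G and all h₀, h₁ ∈ H adjacent in Cay(H;U), the elements g * h₀ and g * h₁ are adjacent in Cay(G;W); consequently the graph Φ with vertex set G and edge set {(g, g * u) : g ∈ G, u ∈ U} is a spanning subgraph of Cay(G;W) whose connected components are exactly the orbits of the H-action, and every connected component of Φ is graph-isomorphic to Cay(H;U). -/
open scoped Pointwise

/-- The (right) Cayley graph of a group w.r.t. a set `S`: `g` and `gs` are adjacent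
for `s ∈ S ∪ S⁻¹`. -/
def cayleyGraph {G : Type*} [Group G] (S : Set G) : SimpleGraph G :=
  SimpleGraph.fromRel (fun g h => g⁻¹ * h ∈ S ∪ S⁻¹)

/-- The orbit graph of a translation-like action: `x` and `a.act x u` are joined by an
edge for `u ∈ U`. -/
def orbitGraph {H G : Type*} [Group H] (U : Set H) (a : RightAction H G) :
    SimpleGraph G :=
  SimpleGraph.fromRel (fun x y => ∃ u ∈ U, a.act x u = y)

/-!
By left invariance of the word metric, an element `h` that moves every point of `G` a bounded
distance does so through finitely many right multipliers `x⁻¹ * (x * h)`. Adjoining those of the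
finitely many `u ∈ U` to a finite generating set of `G` makes every edge of `Φ` an edge of the
Cayley graph, while freeness makes each orbit map `h ↦ x * h` an injection carrying `Cay(H; U)`
onto the part of `Φ` over the orbit of `x`.
-/

section CayleyGraph

variable {G : Type*} [Group G] {S : Set G}

theorem IsFinGenSet.union_finite {T : Set G} (hS : IsFinGenSet S) (hT : T.Finite) :
    IsFinGenSet (S ∪ T) :=
  ⟨hS.1.union hT, top_le_iff.1 (hS.2 ▸ Subgroup.closure_mono Set.subset_union_left)⟩

theorem exists_mem_pow_of_mem_submonoidClosure {M : Type*} [Monoid M] {T : Set M} {x : M}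
    (hx : x ∈ Submonoid.closure T) : ∃ n : ℕ, x ∈ T ^ n := by
  induction hx using Submonoid.closure_induction with
  | mem x hx => exact ⟨1, by rwa [pow_one]⟩
  | one => exact ⟨0, by rw [pow_zero, Set.mem_one]⟩
  | mul x y _ _ hx hy =>
    obtain ⟨n, hn⟩ := hx
    obtain ⟨m, hm⟩ := hy
    exact ⟨n + m, pow_add T n m ▸ Set.mul_mem_mul hn hm⟩

theorem finite_set_pow {M : Type*} [Monoid M] {T : Set M} (hT : T.Finite) (n : ℕ) :
    (T ^ n).Finite := by
  induction n with
  | zero => exact pow_zero T ▸ Set.finite_one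
  | succ n ih => exact pow_succ T n ▸ ih.mul hT

theorem mem_pow_wordDist_one {g : G} (hg : g ∈ Subgroup.closure S) :
    g ∈ (S ∪ S⁻¹) ^ wordDist S 1 g := by
  rw [← Subgroup.mem_toSubmonoid, Subgroup.closure_toSubmonoid] at hg
  have hlengths : {n : ℕ | g ∈ (S ∪ S⁻¹) ^ n}.Nonempty := exists_mem_pow_of_mem_submonoidClosure hg
  simp only [wordDist, inv_one, one_mul]
  exact Nat.sInf_mem hlengths

theorem wordMetric_one_inv_mul (S : Set G) (g h : G) :
    wordMetric S 1 (g⁻¹ * h) = wordMetric S g h := by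
  simp only [wordMetric, wordDist, inv_one, one_mul]

theorem IsFinGenSet.finite_wordMetric_one_le (hS : IsFinGenSet S) (C : ℝ) :
    {g : G | wordMetric S 1 g ≤ C}.Finite := by
  have hballs : (⋃ n ∈ Set.Iic ⌊C⌋₊, (S ∪ S⁻¹) ^ n).Finite :=
    (Set.finite_Iic _).biUnion fun n _ => finite_set_pow (hS.1.union hS.1.inv) n
  exact hballs.subset fun g hg =>
    Set.mem_biUnion (Nat.le_floor hg) (mem_pow_wordDist_one (hS.2 ▸ Subgroup.mem_top g))

theorem cayleyGraph_adj {g h : G} :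
    (cayleyGraph S).Adj g h ↔ g ≠ h ∧ g⁻¹ * h ∈ S ∪ S⁻¹ := by
  have hinv : h⁻¹ * g ∈ S ∪ S⁻¹ ↔ g⁻¹ * h ∈ S ∪ S⁻¹ := by
    rw [← Set.inv_mem_inv, Set.union_inv, inv_inv, Set.union_comm, mul_inv_rev, inv_inv]
  rw [cayleyGraph, SimpleGraph.fromRel_adj, hinv, or_self]

end CayleyGraph

namespace RightAction

section OrbitGraph

variable {H X : Type*} [Group H] {a : RightAction H X} {U : Set H}

theorem act_inv_eq_iff {x y : X} {h : H} : a.act x h⁻¹ = y ↔ a.act y h = x := by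
  constructor <;> rintro rfl <;> simp only [a.act_mul, inv_mul_cancel, mul_inv_cancel, a.act_one]

/-- A right action is free if only the identity of `H` fixes a point; this is the first half of
`IsTranslationLike`. -/
def IsFree (a : RightAction H X) : Prop :=
  ∀ (x : X) (h : H), a.act x h = x → h = 1

theorem IsFree.act_injective (ha : a.IsFree) (x : X) : Function.Injective (a.act x) := by
  intro h k hhk
  have hfix : a.act (a.act x h) (h⁻¹ * k) = a.act x h := by
    rw [a.act_mul, mul_inv_cancel_left, hhk]
  exact inv_mul_eq_one.1 (ha _ _ hfix)

theorem orbitGraph_adj {x y : X} :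
    (orbitGraph U a).Adj x y ↔ x ≠ y ∧ ∃ u ∈ U ∪ U⁻¹, a.act x u = y := by
  have hinv : (∃ u ∈ U⁻¹, a.act x u = y) ↔ ∃ u ∈ U, a.act y u = x := by
    simp only [Set.mem_inv, Set.exists_inv_mem, act_inv_eq_iff]
  simp only [orbitGraph, SimpleGraph.fromRel_adj, Set.mem_union, or_and_right, exists_or, hinv]

theorem orbitGraph_adj_act_iff {x : X} (hinj : Function.Injective (a.act x)) {h k : H} :
    (orbitGraph U a).Adj (a.act x h) (a.act x k) ↔ (cayleyGraph U).Adj h k := by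
  have hstep (u : H) : a.act (a.act x h) u = a.act x k ↔ u = h⁻¹ * k := by
    rw [a.act_mul, hinj.eq_iff, eq_inv_mul_iff_mul_eq]
  simp only [orbitGraph_adj, cayleyGraph_adj, hinj.ne_iff, hstep, exists_eq_right]

theorem reachable_orbitGraph_act {h : H} (hh : h ∈ Subgroup.closure U) (x : X) :
    (orbitGraph U a).Reachable x (a.act x h) := by
  induction hh using Subgroup.closure_induction generalizing x with
  | mem u hu =>
    by_cases hfix : x = a.act x u
    · rw [← hfix]
    · exact (orbitGraph_adj.2 ⟨hfix, u, Or.inl hu, rfl⟩).reachable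
  | one => rw [a.act_one]
  | mul h k _ _ hh hk => exact a.act_mul x h k ▸ (hh x).trans (hk _)
  | inv h _ hh =>
    have hback := hh (a.act x h⁻¹)
    rw [act_inv_eq_iff.1 rfl] at hback
    exact hback.symm

theorem reachable_orbitGraph_iff {x y : X} :
    (orbitGraph U a).Reachable x y ↔ ∃ h ∈ Subgroup.closure U, a.act x h = y := by
  constructor
  · rintro ⟨p⟩
    induction p with
    | nil => exact ⟨1, one_mem _, a.act_one _⟩
    | cons hadj _ ih =>
      obtain ⟨-, u, hu, rfl⟩ := orbitGraph_adj.1 hadj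
      obtain ⟨k, hk, rfl⟩ := ih
      have hu' : u ∈ Subgroup.closure U :=
        hu.elim (Subgroup.subset_closure ·) (inv_mem_iff.1 <| Subgroup.subset_closure ·)
      exact ⟨u * k, mul_mem hu' hk, (a.act_mul _ _ _).symm⟩
  · rintro ⟨h, hh, rfl⟩
    exact reachable_orbitGraph_act hh x

end OrbitGraph

section Displacement

variable {H G : Type*} [Group H] [Group G]

/-- The set of right multipliers `x⁻¹ * (x * h)` by which `h` moves the points of a group `G`
carrying a right action of `H`. Adjoining these sets to a generating set of `G` turns the edges of
an orbit graph into edges of a Cayley graph. -/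
def displacements (a : RightAction H G) (h : H) : Set G :=
  Set.range fun x => x⁻¹ * a.act x h

theorem finite_displacements {a : RightAction H G} {S : Set G} (hS : IsFinGenSet S) {h : H}
    {C : ℝ} (hC : ∀ x, wordMetric S x (a.act x h) ≤ C) : (a.displacements h).Finite := by
  refine (hS.finite_wordMetric_one_le C).subset ?_
  rintro _ ⟨x, rfl⟩
  exact (wordMetric_one_inv_mul S x _).trans_le (hC x)

theorem orbitGraph_le_cayleyGraph {a : RightAction H G} {U : Set H} {W : Set G}
    (hW : ∀ u ∈ U, a.displacements u ⊆ W) : orbitGraph U a ≤ cayleyGraph W := by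
  have hstep (x y : G) : (∃ u ∈ U, a.act x u = y) → x⁻¹ * y ∈ W ∪ W⁻¹ := by
    rintro ⟨u, hu, rfl⟩
    exact Or.inl (hW u hu ⟨x, rfl⟩)
  intro x y hxy
  simp only [orbitGraph, cayleyGraph, SimpleGraph.fromRel_adj] at hxy ⊢
  exact hxy.imp_right (Or.imp (hstep x y) (hstep y x))

end Displacement

end RightAction

theorem translation_like_action_graph_partition_general {H G : Type*} [Group H] [Group G]
    {U : Set H} (hU : IsFinGenSet U) {a : RightAction H G} {S : Set G} (hS : IsFinGenSet S)
    (ha : a.IsTranslationLike (wordMetric S)) :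
    ∃ W : Set G, IsFinGenSet W ∧
      (∀ (g : G) (h₀ h₁ : H), (cayleyGraph U).Adj h₀ h₁ →
        (cayleyGraph W).Adj (a.act g h₀) (a.act g h₁)) ∧
      orbitGraph U a ≤ cayleyGraph W ∧
      (∀ x y : G, (orbitGraph U a).Reachable x y ↔ ∃ h : H, a.act x h = y) ∧
      (∀ (g : G) (h₀ h₁ : H),
        (orbitGraph U a).Adj (a.act g h₀) (a.act g h₁) ↔ (cayleyGraph U).Adj h₀ h₁) := by
  have hfree : a.IsFree := ha.1
  have hfin : (⋃ u ∈ U, a.displacements u).Finite := hU.1.biUnion fun u _ =>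
    have ⟨_, hC⟩ := ha.2 u
    RightAction.finite_displacements hS hC
  have hle : orbitGraph U a ≤ cayleyGraph (S ∪ ⋃ u ∈ U, a.displacements u) :=
    RightAction.orbitGraph_le_cayleyGraph fun u hu =>
      (Set.subset_biUnion_of_mem (u := a.displacements) hu).trans Set.subset_union_right
  have hadj (g : G) (h₀ h₁ : H) :
      (orbitGraph U a).Adj (a.act g h₀) (a.act g h₁) ↔ (cayleyGraph U).Adj h₀ h₁ :=
    RightAction.orbitGraph_adj_act_iff (hfree.act_injective g)
  refine ⟨_, hS.union_finite hfin, fun g h₀ h₁ h => hle ((hadj g h₀ h₁).2 h), hle, ?_, hadj⟩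
  intro x y
  simp only [RightAction.reachable_orbitGraph_iff, hU.2, Subgroup.mem_top, true_and]

/-- If `H` acts translation-like on a finitely generated group `G` and `U = U⁻¹` is a
finite generating set of `H`, then there is a finite generating set `W` of `G` such that
the action maps edges of `Cay(H;U)` to edges of `Cay(G;W)`; consequently the orbit graph
`Φ` is a spanning subgraph of `Cay(G;W)` whose connected components are exactly the orbits
of the action, each component being graph-isomorphic (via the orbit maps) to `Cay(H;U)`. -/
theorem translation_like_action_graph_partition {H G : Type*} [Group H] [Group G]
    [Group.FG G] (U : Set H) (hU : IsFinGenSet U) (hUinv : U⁻¹ = U)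
    (a : RightAction H G)
    (ha : ∀ S : Set G, IsFinGenSet S → a.IsTranslationLike (wordMetric S)) :
    ∃ W : Set G, IsFinGenSet W ∧
      (∀ (g : G) (h₀ h₁ : H), (cayleyGraph U).Adj h₀ h₁ →
        (cayleyGraph W).Adj (a.act g h₀) (a.act g h₁)) ∧
      orbitGraph U a ≤ cayleyGraph W ∧
      (∀ x y : G, (orbitGraph U a).Reachable x y ↔ ∃ h : H, a.act x h = y) ∧
      (∀ (g : G) (h₀ h₁ : H),
        (orbitGraph U a).Adj (a.act g h₀) (a.act g h₁) ↔ (cayleyGraph U).Adj h₀ h₁) := by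
  obtain ⟨S, hgen, hfin⟩ := Group.fg_iff.1 ‹Group.FG G›
  have hS : IsFinGenSet S := ⟨hfin, hgen⟩
  exact translation_like_action_graph_partition_general hU hS (ha S hS)
end
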